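/- In the standing setup, suppose X̂^0 = A^0 ∪ B^0 where A^0 and B^0 are disjoint closed sets such that A^0 lies above B^0. For t ∈ [0,1] let A^t be the union of the components C^t over all components C of A^0, and define B^t analogously. Then for each t ∈ [0,1], X̂^t = A^t ∪ B^t, and A^t and B^t are disjoint, closed, and non-interlaced. -/

import Mathlib

open Set Metric Topology Filter

/-- The set of connected components of a set `S`. -/
def componentsOf {α : Type*} [TopologicalSpace α] (S : Set α) : Set (Set α) :=
  {C | ∃ x ∈ S, C = connectedComponentIn S x}

/-- The union of the unbounded connected components of the complement of `K`;
for compact `K` this is the (unique) unbounded component of `ℂ \ K`. -/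
def unbddComp (K : Set ℂ) : Set ℂ :=
  {z : ℂ | z ∈ Kᶜ ∧ ¬ Bornology.IsBounded (connectedComponentIn Kᶜ z)}

/-- `X^t = ℂ \ U^t`, where `U^t` is the unbounded component of `ℂ \ h^t(Bd X)`. -/
def XtSet (h : ℂ → ℝ → ℂ) (X : Set ℂ) (t : ℝ) : Set ℂ :=
  (unbddComp ((fun z => h z t) '' frontier X))ᶜ

/-- `X̂^t = exp⁻¹(X^t \ {0})`. -/
def hatXt (h : ℂ → ℝ → ℂ) (X : Set ℂ) (t : ℝ) : Set ℂ :=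
  Complex.exp ⁻¹' (XtSet h X t \ {0})

/-- `X̂ = exp⁻¹(X \ {0})`. -/
def hatSet (X : Set ℂ) : Set ℂ := Complex.exp ⁻¹' (X \ {0})

/-- The lift `exp⁻¹(Bd(X) \ {0})` of the punctured boundary of `X`. -/
def bdLift (X : Set ℂ) : Set ℂ := Complex.exp ⁻¹' (frontier X \ {0})

/-- The conditions on the path `s` in the definition of "C lies above D":
`s : [0,1] → {z : Re z ≤ 0} \ C`, `s 0 ∈ D`, `s 1 = 0`. -/
def AbovePath (C D : Set ℂ) (s : ℝ → ℂ) : Prop :=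
  ContinuousOn s (Set.Icc 0 1) ∧ (∀ u ∈ Set.Icc (0:ℝ) 1, (s u).re ≤ 0 ∧ s u ∉ C) ∧
    s 0 ∈ D ∧ s 1 = 0

/-- The ray `R = s([0,1]) ∪ [0,∞)` associated to the path `s`. -/
def AboveRay (s : ℝ → ℂ) : Set ℂ := s '' Set.Icc 0 1 ∪ (Complex.ofReal '' Set.Ici 0)

/-- `C` is contained in the unbounded component of `ℂ \ (D ∪ R)` containing `1 + 2πi`. -/
def AboveVia (C D : Set ℂ) (s : ℝ → ℂ) : Prop :=
  ¬ Bornology.IsBounded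
      (connectedComponentIn (D ∪ AboveRay s)ᶜ ((1 : ℂ) + 2 * (Real.pi : ℂ) * Complex.I)) ∧
  C ⊆ connectedComponentIn (D ∪ AboveRay s)ᶜ ((1 : ℂ) + 2 * (Real.pi : ℂ) * Complex.I)

/-- `C` lies above `D`. -/
def LiesAbove (C D : Set ℂ) : Prop := ∃ s : ℝ → ℂ, AbovePath C D s ∧ AboveVia C D s

/-- `A` lies above `B`: every component of `A` lies above every component of `B`. -/
def LiesAboveSets (A B : Set ℂ) : Prop :=
  ∀ C ∈ componentsOf A, ∀ D ∈ componentsOf B, LiesAbove C D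

/-- Disjoint closed sets `A`, `B` are non-interlaced: for each `z ∉ A ∪ B`, with
`r = dist(z, A ∪ B)`, the sets `A ∩ S(z,r)` and `B ∩ S(z,r)` are contained in two
disjoint closed connected (possibly empty) subsets of the circle `S(z,r)`. -/
def NonInterlaced (A B : Set ℂ) : Prop :=
  ∀ z ∉ A ∪ B,
    ∃ JA JB : Set ℂ,
      JA ⊆ Metric.sphere z (Metric.infDist z (A ∪ B)) ∧
      JB ⊆ Metric.sphere z (Metric.infDist z (A ∪ B)) ∧
      IsClosed JA ∧ IsClosed JB ∧ IsPreconnected JA ∧ IsPreconnected JB ∧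
      Disjoint JA JB ∧
      A ∩ Metric.sphere z (Metric.infDist z (A ∪ B)) ⊆ JA ∧
      B ∩ Metric.sphere z (Metric.infDist z (A ∪ B)) ⊆ JB



/-- No nonempty compact relatively clopen subset. -/
def NC (F : Set ℂ) : Prop :=
  ∀ Q : Set ℂ, Q ⊆ F → IsCompact Q → (∃ O : Set ℂ, IsOpen O ∧ Q = O ∩ F) → Q = ∅

/-- Normalized logarithm of `z - φ w` on `F`. -/
def NLog (ρ φ : ℂ → ℂ) (F : Set ℂ) (z : ℂ) (f : ℂ → ℂ) : Prop :=
  ContinuousOn f F ∧ (∀ w ∈ F, Complex.exp (f w) = z - φ w) ∧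
    Tendsto (fun w => f w - ρ w) (cocompact ℂ ⊓ 𝓟 F) (𝓝 0)

/-- Proper continuous on `F`. -/
def PropOn (φ : ℂ → ℂ) (F : Set ℂ) : Prop :=
  ContinuousOn φ F ∧ Tendsto φ (cocompact ℂ ⊓ 𝓟 F) (cocompact ℂ)

lemma const_of_exp_one {Y : Type*} [TopologicalSpace Y] {S : Set Y} (hS : IsPreconnected S)
    {g : Y → ℂ} (hg : ContinuousOn g S) (h1 : ∀ y ∈ S, Complex.exp (g y) = 1) :
    ∀ x ∈ S, ∀ y ∈ S, g x = g y := by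
  intro x hx y hy
  refine Complex.isCoveringMap_exp.constOn_of_comp hS hg ?_ hx hy
  intro a ha b hb
  ext
  simp [h1 a ha, h1 b hb]

lemma eq_zero_of_exp_one {x : ℂ} (h : Complex.exp x = 1) (hx : ‖x‖ < 1) : x = 0 := by
  obtain ⟨n, rfl⟩ := Complex.exp_eq_one_iff.1 h
  by_cases hn : n = 0
  · simp [hn]
  exfalso
  have h1 : (1 : ℝ) ≤ |(n : ℝ)| := by
    rw [← Int.cast_abs]; exact_mod_cast Int.one_le_abs hn
  have h2 : ‖(n : ℂ) * (2 * Real.pi * Complex.I)‖ = |(n : ℝ)| * (2 * Real.pi) := by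
    simp [abs_of_pos Real.pi_pos]
  rw [h2] at hx
  nlinarith [Real.pi_gt_three]

lemma tendsto_inf_mem {φ : ℂ → ℂ} {F : Set ℂ} {l : Filter ℂ} {P : ℂ → Prop}
    (h : Tendsto φ (cocompact ℂ ⊓ 𝓟 F) l) (hP : ∀ᶠ x in l, P x) :
    ∃ Q : Set ℂ, IsCompact Q ∧ ∀ w ∈ F, w ∉ Q → P (φ w) := by
  have := h.eventually hP
  rw [eventually_inf_principal] at this
  obtain ⟨Q, hQ, hs⟩ := mem_cocompact.1 this
  exact ⟨Q, hQ, fun w hw hwQ => hs hwQ hw⟩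

lemma uniq_zero {F : Set ℂ} (hNC : NC F) (hF : IsClosed F) {g : ℂ → ℂ} (hg : ContinuousOn g F)
    (h1 : ∀ w ∈ F, Complex.exp (g w) = 1)
    (ht : Tendsto g (cocompact ℂ ⊓ 𝓟 F) (𝓝 0)) : ∀ w ∈ F, g w = 0 := by
  have hiff : ∀ w ∈ F, g w ∈ {x : ℂ | 1 ≤ ‖x‖} ↔ g w ∈ {x : ℂ | 0 < ‖x‖} := by
    intro w hw
    simp only [mem_ofPred_eq]
    constructor
    · intro h; linarith
    · intro h
      by_contra hc
      have := eq_zero_of_exp_one (h1 w hw) (not_le.1 hc)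
      simp [this] at h
  obtain ⟨Q, hQ, hQs⟩ := tendsto_inf_mem ht (P := fun x => ‖x‖ < 1)
    (by have := ball_mem_nhds (0:ℂ) one_pos
        filter_upwards [this] with x hx; simpa using hx)
  have hcl : IsClosed (F ∩ g ⁻¹' {x : ℂ | 1 ≤ ‖x‖}) :=
    hg.preimage_isClosed_of_isClosed hF (isClosed_le continuous_const continuous_norm)
  obtain ⟨O, hO, hOe⟩ := (_root_.continuousOn_iff'.1 hg) {x : ℂ | 0 < ‖x‖}
    (isOpen_lt continuous_const continuous_norm)
  have hsub : F ∩ g ⁻¹' {x : ℂ | 1 ≤ ‖x‖} ⊆ Q := by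
    intro w hw
    by_contra hwQ
    have := hQs w hw.1 hwQ
    exact absurd hw.2 (not_le.2 this)
  have hemp := hNC (F ∩ g ⁻¹' {x : ℂ | 1 ≤ ‖x‖}) inter_subset_left
    (hQ.of_isClosed_subset hcl hsub) ⟨O, hO, by
      rw [← hOe]; ext w
      constructor
      · rintro ⟨a, b⟩; exact ⟨(hiff w a).1 b, a⟩
      · rintro ⟨b, a⟩; exact ⟨a, (hiff w a).2 b⟩⟩
  intro w hw
  by_contra hne
  have : w ∈ F ∩ g ⁻¹' {x : ℂ | 1 ≤ ‖x‖} := ⟨hw, (hiff w hw).2 (norm_pos_iff.2 hne)⟩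
  rw [hemp] at this
  exact this

lemma NC.of_clopen {F F1 F2 : Set ℂ} (h : NC F) (hF : F = F1 ∪ F2) (hd : Disjoint F1 F2)
    (h2 : IsClosed F2) : NC F1 := by
  rintro Q hQ hc ⟨O, hO, rfl⟩
  refine h _ (hQ.trans (hF ▸ subset_union_left)) hc ⟨O ∩ F2ᶜ, hO.inter h2.isOpen_compl, ?_⟩
  subst hF
  ext w
  have : w ∈ F1 → w ∉ F2 := fun h => Set.disjoint_left.1 hd h
  simp only [mem_inter_iff, mem_union, mem_compl_iff]
  tauto

lemma PropOn.mono {φ : ℂ → ℂ} {F E : Set ℂ} (h : PropOn φ F) (hE : E ⊆ F) : PropOn φ E :=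
  ⟨h.1.mono hE, h.2.mono_left (inf_le_inf_left _ (principal_mono.2 hE))⟩

lemma NLog.mono {ρ φ : ℂ → ℂ} {F E : Set ℂ} {z : ℂ} {f : ℂ → ℂ} (h : NLog ρ φ F z f)
    (hE : E ⊆ F) : NLog ρ φ E z f :=
  ⟨h.1.mono hE, fun w hw => h.2.1 w (hE hw),
    h.2.2.mono_left (inf_le_inf_left _ (principal_mono.2 hE))⟩

lemma propOn_id (F : Set ℂ) : PropOn id F := ⟨continuousOn_id, tendsto_id.mono_left inf_le_left⟩

lemma PropOn.isProperMap {φ : ℂ → ℂ} {F : Set ℂ} (h : PropOn φ F) (hF : IsClosed F) :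
    IsProperMap (F.domRestrict φ) := by
  rw [isProperMap_iff_tendsto_cocompact]
  refine ⟨h.1.domRestrict, ?_⟩
  refine h.2.comp (tendsto_inf.2 ⟨hF.isClosedEmbedding_subtypeVal.tendsto_cocompact, ?_⟩)
  rw [tendsto_principal]
  exact Eventually.of_forall fun x => x.2

lemma PropOn.isClosed_image {φ : ℂ → ℂ} {F : Set ℂ} (h : PropOn φ F) (hF : IsClosed F) :
    IsClosed (φ '' F) := by
  have := (h.isProperMap hF).isClosedMap univ isClosed_univ
  rwa [image_univ, range_domRestrict] at this

lemma NLog.uniq {ρ φ : ℂ → ℂ} {F : Set ℂ} (hNC : NC F) (hF : IsClosed F) {z : ℂ} {f g : ℂ → ℂ}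
    (hf : NLog ρ φ F z f) (hg : NLog ρ φ F z g) : ∀ w ∈ F, f w = g w := by
  have := uniq_zero hNC hF (g := fun w => f w - g w) (hf.1.sub hg.1) (by
    intro w hw
    have h1 := hf.2.1 w hw
    have h2 := hg.2.1 w hw
    rw [Complex.exp_sub, h1, ← h2, div_self (Complex.exp_ne_zero _)]) (by
    have := hf.2.2.sub hg.2.2
    simpa using this)
  intro w hw
  exact sub_eq_zero.1 (this w hw)

/-- log of ratio tends to 0 at infinity -/
lemma tendsto_ratio (z z' : ℂ) :
    Tendsto (fun w : ℂ => (z' - w) / (z - w)) (cocompact ℂ) (𝓝 1) := by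
  have h1 : Tendsto (fun w : ℂ => z - w) (cocompact ℂ) (cocompact ℂ) :=
    (Homeomorph.subLeft z).isClosedEmbedding.tendsto_cocompact
  have h2 : Tendsto (fun w : ℂ => 1 + (z' - z) * (z - w)⁻¹) (cocompact ℂ) (𝓝 (1 + (z' - z) * 0)) :=
    tendsto_const_nhds.add (tendsto_const_nhds.mul ((tendsto_inv₀_cobounded ).comp
      (h1.mono_right (Metric.cobounded_eq_cocompact (α := ℂ)).ge)))
  simp only [mul_zero, add_zero] at h2
  refine h2.congr' ?_
  have : ∀ᶠ w : ℂ in cocompact ℂ, w ≠ z := by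
    have := (isCompact_singleton (x := z)).compl_mem_cocompact
    filter_upwards [this] with w hw
    simpa using hw
  filter_upwards [this] with w hw
  have : z - w ≠ 0 := sub_ne_zero.2 hw.symm
  field_simp
  ring

lemma tendsto_log_ratio (z z' : ℂ) :
    Tendsto (fun w : ℂ => Complex.log ((z' - w) / (z - w))) (cocompact ℂ) (𝓝 0) := by
  have := (continuousAt_clog (x := 1) (by simp)).tendsto.comp (tendsto_ratio z z')
  rw [Complex.log_one] at this
  exact this

lemma NLog.perturb {ρ φ : ℂ → ℂ} {F : Set ℂ} {z z' : ℂ} {f : ℂ → ℂ} (hφ : PropOn φ F)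
    (h : NLog ρ φ F z f) (hs : ∀ w ∈ F, (z' - φ w) / (z - φ w) ∈ Complex.slitPlane) :
    NLog ρ φ F z' (fun w => f w + Complex.log ((z' - φ w) / (z - φ w))) := by
  have hne : ∀ w ∈ F, z - φ w ≠ 0 := fun w hw => by rw [← h.2.1 w hw]; exact Complex.exp_ne_zero _
  refine ⟨h.1.add (ContinuousOn.clog ((continuousOn_const.sub hφ.1).div
    (continuousOn_const.sub hφ.1) hne) hs), ?_, ?_⟩
  · intro w hw
    rw [Complex.exp_add, h.2.1 w hw, Complex.exp_log (Complex.slitPlane_ne_zero (hs w hw))]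
    field_simp [hne w hw]
  · have := h.2.2.add ((tendsto_log_ratio z z').comp hφ.2)
    simp only [add_zero] at this
    refine this.congr fun w => ?_
    simp; ring

lemma ratio_slit {z z' q : ℂ} (h : ‖z' - z‖ < ‖z - q‖) :
    0 < ((z' - q) / (z - q)).re := by
  have hne : z - q ≠ 0 := by
    intro h0; rw [h0, norm_zero] at h; exact absurd h (not_lt.2 (norm_nonneg _))
  have e : (z' - q) / (z - q) = 1 + (z' - z) / (z - q) := by field_simp; ring
  rw [e, Complex.add_re, Complex.one_re]
  have h1 : ‖(z' - z) / (z - q)‖ < 1 := by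
    rw [norm_div, div_lt_one (norm_pos_iff.2 hne)]; exact h
  have := (abs_le.1 (Complex.abs_re_le_norm ((z' - z) / (z - q)))).1
  linarith

lemma ratio_slit' {z z' q : ℂ} (h : ‖z' - z‖ ≤ ‖z - q‖) (hq : z' ≠ q) (hzq : z ≠ q) :
    0 < ((z' - q) / (z - q)).re := by
  have hne : z - q ≠ 0 := sub_ne_zero.2 hzq
  have e : (z' - q) / (z - q) = 1 + (z' - z) / (z - q) := by field_simp; ring
  have hne2 : (z' - q) / (z - q) ≠ 0 := div_ne_zero (sub_ne_zero.2 hq) hne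
  rw [e] at hne2 ⊢
  set u := (z' - z) / (z - q)
  have h1 : ‖u‖ ≤ 1 := by
    rw [norm_div, div_le_one (norm_pos_iff.2 hne)]; exact h
  have h2 : u.re ^ 2 + u.im ^ 2 ≤ 1 := by
    have := Complex.sq_norm u
    rw [Complex.normSq_apply] at this
    nlinarith [norm_nonneg u]
  rw [Complex.add_re, Complex.one_re]
  by_contra hc
  apply hne2
  have h3 : u.re = -1 := by nlinarith [sq_nonneg u.im]
  have h4 : u.im = 0 := by rw [h3] at h2; nlinarith [sq_nonneg u.im]
  apply Complex.ext <;> simp [h3, h4]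

/-- points with a normalized log -/
def GoodSet (ρ φ : ℂ → ℂ) (F : Set ℂ) : Set ℂ := {z | ∃ f, NLog ρ φ F z f}

lemma good_not_mem {ρ φ : ℂ → ℂ} {F : Set ℂ} {z : ℂ} (hz : z ∈ GoodSet ρ φ F) : z ∉ φ '' F := by
  rintro ⟨w, hw, rfl⟩
  obtain ⟨f, hf⟩ := hz
  have := hf.2.1 w hw
  rw [sub_self] at this
  exact Complex.exp_ne_zero _ this

lemma good_perturb {ρ φ : ℂ → ℂ} {F : Set ℂ} {z z' : ℂ} (hφ : PropOn φ F)
    (hz : z ∈ GoodSet ρ φ F) (h : ∀ w ∈ F, ‖z' - z‖ < ‖z - φ w‖) : z' ∈ GoodSet ρ φ F := by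
  obtain ⟨f, hf⟩ := hz
  exact ⟨_, hf.perturb hφ fun w hw => Or.inl (ratio_slit (h w hw))⟩

lemma exists_dist_pos {E : Set ℂ} (hE : IsClosed E) {z : ℂ} (hz : z ∉ E) :
    ∃ r > 0, ∀ q ∈ E, r ≤ ‖z - q‖ := by
  obtain ⟨r, hr, h⟩ := Metric.isOpen_iff.1 hE.isOpen_compl z hz
  refine ⟨r, hr, fun q hq => ?_⟩
  by_contra hc
  have : q ∈ ball z r := by rw [mem_ball, dist_comm, dist_eq_norm]; exact not_le.1 hc
  exact h this hq

lemma good_isOpen {ρ φ : ℂ → ℂ} {F : Set ℂ} (hφ : PropOn φ F) (hF : IsClosed F) :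
    IsOpen (GoodSet ρ φ F) := by
  rw [Metric.isOpen_iff]
  intro z hz
  obtain ⟨r, hr, h⟩ := exists_dist_pos (hφ.isClosed_image hF) (good_not_mem hz)
  refine ⟨r, hr, fun z' hz' => good_perturb hφ hz fun w hw => ?_⟩
  rw [mem_ball, dist_eq_norm] at hz'
  exact hz'.trans_le (h _ ⟨w, hw, rfl⟩)

lemma good_closure {ρ φ : ℂ → ℂ} {F : Set ℂ} (hφ : PropOn φ F) (hF : IsClosed F) {z : ℂ}
    (hz : z ∈ closure (GoodSet ρ φ F)) (hzF : z ∉ φ '' F) : z ∈ GoodSet ρ φ F := by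
  obtain ⟨r, hr, h⟩ := exists_dist_pos (hφ.isClosed_image hF) hzF
  obtain ⟨y, hy, hyd⟩ := Metric.mem_closure_iff.1 hz (r / 2) (half_pos hr)
  refine good_perturb hφ hy fun w hw => ?_
  rw [dist_eq_norm] at hyd
  have h1 := h _ ⟨w, hw, rfl⟩
  have h2 : ‖z - φ w‖ ≤ ‖z - y‖ + ‖y - φ w‖ := norm_sub_le_norm_sub_add_norm_sub _ _ _
  linarith

lemma good_preconn {ρ φ : ℂ → ℂ} {F W : Set ℂ} (hφ : PropOn φ F) (hF : IsClosed F)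
    (hW : IsPreconnected W) (hWF : ∀ w ∈ W, w ∉ φ '' F) {z : ℂ} (hzW : z ∈ W)
    (hz : z ∈ GoodSet ρ φ F) : W ⊆ GoodSet ρ φ F :=
  hW.subset_of_closure_inter_subset (good_isOpen hφ hF) ⟨z, hzW, hz⟩
    fun _ hx => good_closure hφ hF hx.1 (hWF _ hx.2)


noncomputable def rho (w : ℂ) : ℂ := Complex.log (1 - w)

lemma log_div_of_re_pos {x y : ℂ} (hx : 0 < x.re) (hy : 0 < y.re) :
    Complex.log (x / y) = Complex.log x - Complex.log y := by
  have hx0 : x ≠ 0 := by rintro rfl; simp at hx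
  have hy0 : y ≠ 0 := by rintro rfl; simp at hy
  have h1 := abs_lt.1 (Complex.abs_arg_lt_pi_div_two_iff.2 (Or.inl hx))
  have h2 := abs_lt.1 (Complex.abs_arg_lt_pi_div_two_iff.2 (Or.inl hy))
  have hne : y.arg ≠ Real.pi := by linarith [Real.pi_pos]
  have hinv : Complex.log y⁻¹ = - Complex.log y := Complex.log_inv y hne
  have harg : y⁻¹.arg = - y.arg := by rw [Complex.arg_inv, if_neg hne]
  rw [div_eq_mul_inv, Complex.log_mul hx0 (inv_ne_zero hy0), hinv, sub_eq_add_neg]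
  rw [harg]; constructor <;> linarith

lemma div_slit_of_re_pos {x y : ℂ} (hx : 0 < x.re) (hy : 0 < y.re) :
    x / y ∈ Complex.slitPlane := by
  have hx0 : x ≠ 0 := by rintro rfl; simp at hx
  have hy0 : y ≠ 0 := by rintro rfl; simp at hy
  rw [Complex.mem_slitPlane_iff_arg]
  refine ⟨?_, div_ne_zero hx0 hy0⟩
  have h := log_div_of_re_pos hx hy
  have h1 := abs_lt.1 (Complex.abs_arg_lt_pi_div_two_iff.2 (Or.inl hx))
  have h2 := abs_lt.1 (Complex.abs_arg_lt_pi_div_two_iff.2 (Or.inl hy))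
  have h3 := congrArg Complex.im h
  simp only [Complex.log_im, Complex.sub_im] at h3
  linarith

lemma NLog.one {φ : ℂ → ℂ} {F : Set ℂ} (hφ : PropOn φ F) (hF : ∀ w ∈ F, (φ w).re < 0) :
    NLog (fun w => rho (φ w)) φ F 1 (fun w => rho (φ w)) := by
  have hp : ∀ w ∈ F, 0 < (1 - φ w).re := fun w hw => by
    have := hF w hw; simp; linarith
  refine ⟨(continuousOn_const.sub hφ.1).clog fun w hw => Or.inl (hp w hw), fun w hw => ?_, ?_⟩
  · refine Complex.exp_log fun h => ?_
    have := hp w hw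
    rw [h] at this; simp at this
  · simp only [sub_self]; exact tendsto_const_nhds

lemma NLog.base {F : Set ℂ} (hF : ∀ w ∈ F, w.re < 0) {z : ℂ} (hz : 0 ≤ z.re) :
    NLog rho id F z (fun w => Complex.log (z - w)) := by
  have h1 : NLog rho id F 1 rho := NLog.one (propOn_id F) hF
  have hp : ∀ w ∈ F, 0 < (1 - w).re := fun w hw => by
    have := hF w hw; simp; linarith
  have hq : ∀ w ∈ F, 0 < (z - w).re := fun w hw => by
    have := hF w hw; simp; linarith
  have h2 := h1.perturb (z' := z) (propOn_id F) fun w hw => div_slit_of_re_pos (hq w hw) (hp w hw)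
  have he : ∀ w ∈ F, Complex.log (z - w) = rho w + Complex.log ((z - id w) / (1 - id w)) := by
    intro w hw
    rw [id, log_div_of_re_pos (hq w hw) (hp w hw), rho]; ring
  refine ⟨h2.1.congr he, fun w hw => ?_, ?_⟩
  · exact (congrArg Complex.exp (he w hw)).trans (h2.2.1 w hw)
  · refine h2.2.2.congr' ?_
    rw [EventuallyEq, eventually_inf_principal]
    exact Eventually.of_forall fun w hw => by simp only [he w hw]

open Classical in
noncomputable def lam (F : Set ℂ) (z w : ℂ) : ℂ :=
  if h : ∃ f, NLog rho id F z f then h.choose w else 0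

lemma lam_spec {F : Set ℂ} {z : ℂ} (h : z ∈ GoodSet rho id F) : NLog rho id F z (lam F z) := by
  have h' : ∃ f, NLog rho id F z f := h
  have : lam F z = h'.choose := by funext w; simp [lam, h']
  rw [this]; exact h'.choose_spec

lemma lam_eq {F : Set ℂ} (hNC : NC F) (hF : IsClosed F) {z : ℂ} {f : ℂ → ℂ}
    (h : NLog rho id F z f) : ∀ w ∈ F, lam F z w = f w :=
  NLog.uniq hNC hF (lam_spec ⟨f, h⟩) h

lemma lam_cont {F : Set ℂ} (hNC : NC F) (hF : IsClosed F) {w : ℂ} (hw : w ∈ F) :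
    ContinuousOn (fun z => lam F z w) (GoodSet rho id F) := by
  intro z hz
  refine ContinuousAt.continuousWithinAt ?_
  have hwz : z - w ≠ 0 := by
    have := (lam_spec hz).2.1 w hw
    rw [id] at this; rw [← this]; exact Complex.exp_ne_zero _
  obtain ⟨r, hr, h⟩ := exists_dist_pos hF (z := z) (by simpa using good_not_mem hz)
  have hev : (fun z' => lam F z w + Complex.log ((z' - w) / (z - w))) =ᶠ[𝓝 z]
      fun z' => lam F z' w := by
    filter_upwards [ball_mem_nhds z hr] with z' hz'
    rw [mem_ball, dist_eq_norm] at hz'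
    have := (lam_spec hz).perturb (z' := z') (propOn_id F) fun q hq =>
      Or.inl (ratio_slit (hz'.trans_le (h q hq)))
    rw [lam_eq hNC hF this w hw]; rfl
  refine ContinuousAt.congr ?_ hev
  refine continuousAt_const.add (ContinuousAt.clog ?_ ?_)
  · fun_prop
  · rw [div_self hwz]; simp

lemma above_key {C D : Set ℂ} (hC : IsClosed C) (hD : IsClosed D) (hNC : NC C) (hND : NC D)
    (hCr : ∀ w ∈ C, w.re < 0) (hDr : ∀ w ∈ D, w.re < 0) {s : ℝ → ℂ}
    (hp : AbovePath C D s) (hv : AboveVia C D s) {a : ℂ} (ha : a ∈ C) :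
    lam D a (s 0) = lam C (s 0) a + Real.pi * Complex.I := by
  obtain ⟨hsc, hs1, hs0, hsone⟩ := hp
  obtain ⟨-, hCsub⟩ := hv
  set p : ℂ := (1 : ℂ) + 2 * (Real.pi : ℂ) * Complex.I with hpdef
  have hpre : p.re = 1 := by simp [hpdef]
  have hpim : p.im = 2 * Real.pi := by simp [hpdef]
  set F := D ∪ AboveRay s with hFdef
  have hFcl : IsClosed F := by
    refine hD.union (IsClosed.union (isCompact_Icc.image_of_continuousOn hsc).isClosed ?_)
    exact Complex.isometry_ofReal.isClosedEmbedding.isClosedMap _ isClosed_Ici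
  have hFr : ∀ q ∈ F, q.re ≤ 0 ∨ (q.im = 0) := by
    rintro q (hq | ⟨u, hu, rfl⟩ | ⟨x, hx, rfl⟩)
    · exact Or.inl (hDr q hq).le
    · exact Or.inl (hs1 u hu).1
    · right; simp
  have hslit : ∀ q ∈ F, p - q ∈ Complex.slitPlane := by
    intro q hq
    rcases hFr q hq with h | h
    · left; rw [Complex.sub_re, hpre]; linarith
    · right; rw [Complex.sub_im, hpim, h]; linarith [Real.pi_pos]
  have hpF : p ∈ Fᶜ := fun h => by
    have := hslit p h; simp at this
  have hNp : NLog (fun q => Complex.log (p - q)) id F p (fun q => Complex.log (p - q)) := by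
    refine ⟨(continuousOn_const.sub continuousOn_id).clog hslit, fun w hw => ?_,
      by simp only [sub_self]; exact tendsto_const_nhds⟩
    exact Complex.exp_log (Complex.slitPlane_ne_zero (hslit w hw))
  obtain ⟨f, hf⟩ := good_preconn (propOn_id F) hFcl isPreconnected_connectedComponentIn
    (W := connectedComponentIn Fᶜ p)
    (fun w hw => by simpa using connectedComponentIn_subset _ _ hw)
    (mem_connectedComponentIn hpF) ⟨_, hNp⟩ (hCsub ha)
  -- on `D`
  have hfD : ∀ w ∈ D, lam D a w = f w := by
    refine lam_eq hND hD ?_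
    have h1 := hf.mono (E := D) subset_union_left
    refine ⟨h1.1, h1.2.1, ?_⟩
    have h2 := h1.2.2.add (NLog.base hDr (z := p) (by rw [hpre]; norm_num)).2.2
    simpa using h2
  have har := hCr a ha
  -- on the ray
  have hfray : f 0 = Complex.log (0 - a) + Real.pi * Complex.I := by
    have hmem : ∀ x : ℝ, 0 ≤ x → (x : ℂ) ∈ F := fun x hx => Or.inr (Or.inr ⟨x, hx, rfl⟩)
    let k : ℝ → ℂ := fun x => f x - Complex.log (x - a) - Real.pi * Complex.I
    have hxa : ∀ x : ℝ, 0 ≤ x → 0 < ((x : ℂ) - a).re := fun x hx => by simp; linarith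
    have hkc : ContinuousOn k (Ici 0) := by
      refine ContinuousOn.sub (ContinuousOn.sub ?_ ?_) continuousOn_const
      · exact hf.1.comp Complex.continuous_ofReal.continuousOn fun x hx => hmem x hx
      · refine ContinuousOn.clog ?_ fun x hx => Or.inl (hxa x hx)
        exact (Complex.continuous_ofReal.sub continuous_const).continuousOn
    have hk1 : ∀ x ∈ Ici (0:ℝ), Complex.exp (k x) = 1 := by
      intro x hx
      have h1 := hf.2.1 _ (hmem x hx)
      have h3 : (x : ℂ) - a ≠ 0 := fun h => by have := hxa x hx; rw [h] at this; simp at this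
      simp only [k]
      rw [Complex.exp_sub, Complex.exp_sub, h1, Complex.exp_log h3, Complex.exp_pi_mul_I, id]
      field_simp
      ring
    have hconst := const_of_exp_one isPreconnected_Ici hkc hk1
    have htop : Tendsto (fun x : ℝ => (x : ℂ)) atTop (cocompact ℂ ⊓ 𝓟 F) := by
      refine tendsto_inf.2 ⟨?_, ?_⟩
      · refine Complex.isometry_ofReal.isClosedEmbedding.tendsto_cocompact.mono_left ?_
        exact atTop_le_cocompact
      · rw [tendsto_principal]
        filter_upwards [eventually_ge_atTop 0] with x hx using hmem x hx
    have ht1 := hf.2.2.comp htop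
    have ht2 : Tendsto (fun x : ℝ => Complex.log ((p - x) / (a - x))) atTop (𝓝 0) :=
      (tendsto_log_ratio a p).comp (htop.mono_right inf_le_left)
    have ht3 : Tendsto k atTop (𝓝 0) := by
      have := ht1.add ht2
      rw [add_zero] at this
      refine this.congr' ?_
      filter_upwards [eventually_gt_atTop 1] with x hx
      have e1 : (p - x) / (a - x) = ((x : ℂ) - p) / (x - a) := by
        rw [← neg_sub, ← neg_sub (x : ℂ) a, neg_div_neg_eq]
      have hxp : 0 < ((x : ℂ) - p).re := by
        rw [Complex.sub_re, hpre, Complex.ofReal_re]; linarith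
      have e2 : Complex.log (p - x) = Complex.log (x - p) + Real.pi * Complex.I := by
        rw [← neg_sub (x : ℂ) p, Complex.log, Complex.log, norm_neg,
          Complex.arg_neg_eq_arg_add_pi_of_im_neg]
        · push_cast; ring
        · rw [Complex.sub_im, hpim, Complex.ofReal_im]; linarith [Real.pi_pos]
      simp only [Function.comp, k]
      rw [e1, log_div_of_re_pos hxp (hxa x (by linarith)), e2]
      ring
    have hk0 : k 0 = 0 := by
      refine tendsto_nhds_unique (tendsto_const_nhds.congr' ?_) ht3
      filter_upwards [eventually_ge_atTop 0] with x hx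
      exact hconst 0 (by simp) x hx
    have := hk0
    simp only [k, Complex.ofReal_zero] at this
    linear_combination this
  -- along the path
  have hgood : ∀ u ∈ Icc (0:ℝ) 1, s u ∈ GoodSet rho id C := by
    have := good_preconn (ρ := rho) (propOn_id C) hC (isPreconnected_Icc.image s hsc)
      (by rintro w ⟨u, hu, rfl⟩; simpa using (hs1 u hu).2)
      (z := 0) ⟨1, by simp, hsone⟩ ⟨_, NLog.base hCr (by simp)⟩
    exact fun u hu => this ⟨u, hu, rfl⟩
  have hsF : ∀ u ∈ Icc (0:ℝ) 1, s u ∈ F := fun u hu => Or.inr (Or.inl ⟨u, hu, rfl⟩)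
  let m : ℝ → ℂ := fun u => f (s u) - lam C (s u) a - Real.pi * Complex.I
  have hm : ContinuousOn m (Icc 0 1) := by
    refine ContinuousOn.sub (ContinuousOn.sub (hf.1.comp hsc hsF) ?_) continuousOn_const
    exact (lam_cont hNC hC ha).comp hsc hgood
  have hm1 : ∀ u ∈ Icc (0:ℝ) 1, Complex.exp (m u) = 1 := by
    intro u hu
    have h1 := hf.2.1 _ (hsF u hu)
    have h2 := (lam_spec (hgood u hu)).2.1 a ha
    have h3 : s u - a ≠ 0 := by rw [id] at h2; rw [← h2]; exact Complex.exp_ne_zero _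
    simp only [m]
    rw [Complex.exp_sub, Complex.exp_sub, h1, h2, Complex.exp_pi_mul_I, id, id]
    field_simp
    ring
  have h01 := const_of_exp_one isPreconnected_Icc hm hm1 0 (by simp) 1 (by simp)
  have hm_one : m 1 = 0 := by
    simp only [m, hsone]
    rw [hfray, lam_eq hNC hC (NLog.base hCr (z := 0) (by simp)) a ha]; ring
  rw [hm_one] at h01
  rw [hfD _ hs0]
  simp only [m] at h01
  linear_combination h01


lemma lift_exp {φ : ℂ → ℂ} (hφ : Continuous φ) (h0 : ∀ z, φ z ≠ 0) :
    ∃ Φ : ℂ → ℂ, Continuous Φ ∧ ∀ z, Complex.exp (Φ z) = φ z := by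
  obtain ⟨F, ⟨-, hF⟩, -⟩ := Complex.isCoveringMapOn_exp.existsUnique_continuousMap_lifts
    (A := ℂ) ⟨φ, hφ⟩ (a₀ := 0) (e₀ := Complex.log (φ 0)) (Complex.exp_log (h0 0))
    (fun a => by simpa using h0 a)
  exact ⟨F, F.continuous, fun z => congrFun hF z⟩

lemma frontier_preconn {X : Set ℂ} (hX : IsClosed X) (hc : IsPreconnected X)
    (hc' : IsPreconnected Xᶜ) : IsPreconnected (frontier X) := by
  rw [isPreconnected_iff_subset_of_fully_disjoint_closed isClosed_frontier]
  intro u v hu hv huv hd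
  obtain ⟨g, hgu, hgv, -⟩ := exists_continuous_zero_one_of_isClosed hu hv hd
  let ψ : ℂ → ℂ := fun w => Complex.exp (2 * Real.pi * Complex.I * (g w : ℂ))
  have hψ : Continuous ψ := by fun_prop
  have hψf : ∀ w ∈ frontier X, ψ w = 1 := by
    intro w hw
    rcases huv hw with h | h
    · have := hgu h
      simp only [ψ]; rw [this]; simp
    · have := hgv h
      simp only [ψ]; rw [this]; simp [Complex.exp_two_pi_mul_I]
  classical
  let φ : ℂ → ℂ := fun w => if w ∈ X then ψ w else 1
  have hφ : Continuous φ := by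
    refine continuous_if (p := fun w => w ∈ X) (f := ψ) (g := fun _ => (1:ℂ)) ?_
      hψ.continuousOn continuousOn_const
    intro a ha; exact hψf a ha
  obtain ⟨Φ, hΦ, hΦe⟩ := lift_exp hφ (fun z => by
    simp only [φ]; split_ifs
    · exact Complex.exp_ne_zero _
    · exact one_ne_zero)
  have hconst1 := const_of_exp_one hc'.closure hΦ.continuousOn (by
    intro w hw
    rw [hΦe]; simp only [φ]; split_ifs with h
    · refine hψf w ⟨subset_closure h, ?_⟩
      rw [closure_compl] at hw; exact hw
    · rfl)
  have hconst2 := const_of_exp_one hc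
    (g := fun w => Φ w - 2 * Real.pi * Complex.I * (g w : ℂ)) (by fun_prop) (by
    intro w hw
    rw [Complex.exp_sub, hΦe]; simp only [φ, if_pos hw, ψ]
    exact div_self (Complex.exp_ne_zero _))
  by_contra hcon
  rw [not_or] at hcon
  obtain ⟨h1, h2⟩ := hcon
  obtain ⟨a, ha, hau⟩ := not_subset.1 h1
  obtain ⟨b, hb, hbv⟩ := not_subset.1 h2
  have hav : a ∈ v := (huv ha).resolve_left hau
  have hbu : b ∈ u := (huv hb).resolve_right hbv
  have hfX : frontier X ⊆ X := hX.frontier_subset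
  have hfX' : frontier X ⊆ closure Xᶜ := by
    rw [frontier_eq_closure_inter_closure]; exact inter_subset_right
  have e1 := hconst1 a (hfX' ha) b (hfX' hb)
  have e2 := hconst2 a (hfX ha) b (hfX hb)
  have ga : g a = 1 := hgv hav
  have gb : g b = 0 := hgu hbu
  simp only [ga, gb, e1] at e2
  have : (2 * Real.pi * Complex.I : ℂ) = 0 := by
    push_cast at e2; linear_combination -e2
  simp at this

lemma exp_isOpenMap : IsOpenMap Complex.exp := by
  have h := Complex.isCoveringMap_exp.isLocalHomeomorph.isOpenMap
  have h2 : IsOpenMap (Subtype.val : {z : ℂ // z ≠ 0} → ℂ) :=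
    (isOpen_ne (x := (0:ℂ))).isOpenMap_subtype_val
  exact h2.comp h

lemma NC_lift {Y : Set ℂ} (hY : IsPreconnected Y) (h0 : (0:ℂ) ∈ Y) :
    NC (Complex.exp ⁻¹' (Y \ {0})) := by
  rintro Q hQ hc ⟨O, hO, hQO⟩
  by_contra hne
  obtain ⟨q, hq⟩ := nonempty_iff_ne_empty.2 hne
  have hcl : IsClosed (Complex.exp '' Q) := (hc.image Complex.continuous_exp).isClosed
  have hop : IsOpen (Complex.exp '' O) := exp_isOpenMap O hO
  have heq : Complex.exp '' Q ∩ Y = Complex.exp '' O ∩ Y := by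
    ext y
    constructor
    · rintro ⟨⟨w, hw, rfl⟩, hy⟩
      rw [hQO] at hw
      exact ⟨⟨w, hw.1, rfl⟩, hy⟩
    · rintro ⟨⟨w, hw, rfl⟩, hy⟩
      refine ⟨⟨w, ?_, rfl⟩, hy⟩
      rw [hQO]
      exact ⟨hw, hy, by simp⟩
  have hsub : Y ⊆ Complex.exp '' O := by
    refine hY.subset_of_closure_inter_subset hop ⟨Complex.exp q, (hQ hq).1, q, ?_, rfl⟩ ?_
    · rw [hQO] at hq; exact hq.1
    · rintro y ⟨hy1, hy2⟩
      by_contra hno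
      have hnQ : y ∉ Complex.exp '' Q := fun h => hno (heq.subset ⟨h, hy2⟩).1
      have : Y ⊆ Complex.exp '' O := by
        by_contra hns
        obtain ⟨x, hx, hxO⟩ := not_subset.1 hns
        obtain ⟨t, ht, ht2⟩ := hY _ _ hop hcl.isOpen_compl (by
          intro t ht
          by_cases h : t ∈ Complex.exp '' Q
          · exact Or.inl (heq.subset ⟨h, ht⟩).1
          · exact Or.inr h) ⟨Complex.exp q, (hQ hq).1, q, by rw [hQO] at hq; exact hq.1, rfl⟩
          ⟨y, hy2, hnQ⟩
        exact ht2.2 (heq.symm.subset ⟨ht2.1, ht⟩).1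
      exact hno (this hy2)
  have := hsub h0
  obtain ⟨w, -, hw⟩ := this
  exact Complex.exp_ne_zero _ hw

lemma exp_preimage_preconn {U : Set ℂ} (hU : IsOpen U) (hc : IsPreconnected U)
    (h1 : ∀ z : ℂ, 1 ≤ ‖z‖ → z ∈ U) (h0 : (0:ℂ) ∉ U) : IsPreconnected (Complex.exp ⁻¹' U) := by
  have hone : (1:ℂ) ∈ U := h1 1 (by simp)
  have hpc : IsPathConnected U := (hU.isConnected_iff_isPathConnected).1 ⟨⟨1, hone⟩, hc⟩
  have hconv : IsPreconnected {z : ℂ | 0 ≤ z.re} := (convex_halfSpace_re_ge 0).isPreconnected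
  have hhalf : {z : ℂ | 0 ≤ z.re} ⊆ Complex.exp ⁻¹' U := by
    intro z hz
    apply h1
    rw [Complex.norm_exp]
    exact Real.one_le_exp hz
  refine isPreconnected_of_forall 0 ?_
  intro x hx
  obtain ⟨γ, hγ⟩ := hpc.joinedIn _ hx _ hone
  let γ' : C(unitInterval, {z : ℂ // z ≠ 0}) :=
    ⟨fun t => ⟨γ t, fun h => h0 (h ▸ hγ t)⟩, by fun_prop⟩
  obtain ⟨Γ, hΓ, hΓ0⟩ := Complex.isCoveringMap_exp.exists_path_lifts γ' x (by ext; simp [γ'])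
  have hΓe : ∀ t, Complex.exp (Γ t) = γ t := fun t => congrArg Subtype.val (congrFun hΓ t)
  refine ⟨range Γ ∪ {z : ℂ | 0 ≤ z.re}, ?_, Or.inr (by simp), Or.inl ⟨0, hΓ0⟩, ?_⟩
  · refine union_subset ?_ hhalf
    rintro _ ⟨t, rfl⟩
    change Complex.exp (Γ t) ∈ U
    rw [hΓe]; exact hγ t
  · refine IsPreconnected.union (Γ 1) ⟨1, rfl⟩ ?_ (isPreconnected_range Γ.continuous) hconv
    have h2 : ‖Complex.exp (Γ 1)‖ = 1 := by rw [hΓe]; simp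
    rw [Complex.norm_exp, Real.exp_eq_one_iff] at h2
    exact h2.ge

lemma isClosed_comp {F : Set ℂ} (hF : IsClosed F) (x : ℂ) :
    IsClosed (connectedComponentIn F x) := by
  by_cases hx : x ∈ F
  · have h1 : closure (connectedComponentIn F x) ⊆ F :=
      closure_minimal (connectedComponentIn_subset _ _) hF
    have h2 := isPreconnected_connectedComponentIn (F := F) (x := x)
    have := h2.closure.subset_connectedComponentIn
      (subset_closure (mem_connectedComponentIn hx)) h1
    exact isClosed_of_closure_subset this
  · rw [connectedComponentIn_eq_empty hx]; exact isClosed_empty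

lemma NC_component {F : Set ℂ} (hF : IsClosed F) (hNC : NC F) {x : ℂ} (hx : x ∈ F) :
    NC (connectedComponentIn F x) := by
  rintro Q hQ hc ⟨O, hO, hQO⟩
  by_contra hne
  obtain ⟨q, hq⟩ := nonempty_iff_ne_empty.2 hne
  set D := connectedComponentIn F x with hD
  have hDF : D ⊆ F := connectedComponentIn_subset _ _
  have hDp : IsPreconnected D := isPreconnected_connectedComponentIn
  have hDQ : D ⊆ Q := by
    by_contra hns
    obtain ⟨y, hy, hyQ⟩ := not_subset.1 hns
    obtain ⟨t, ht, ht2⟩ := hDp _ _ hO hc.isClosed.isOpen_compl (by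
      intro t ht
      by_cases h : t ∈ Q
      · left; rw [hQO] at h; exact h.1
      · exact Or.inr h) ⟨q, hQ hq, by rw [hQO] at hq; exact hq.1⟩ ⟨y, hy, hyQ⟩
    apply ht2.2
    rw [hQO]; exact ⟨ht2.1, ht⟩
  obtain ⟨M, hM⟩ := hc.isBounded.subset_ball (0:ℂ)
  have hDM : D ⊆ ball 0 M := hDQ.trans hM
  have hxD : x ∈ D := mem_connectedComponentIn hx
  set Y := F ∩ closedBall (0:ℂ) M with hY
  have hYc : IsCompact Y := (isCompact_closedBall _ _).inter_left hF
  have hxY : x ∈ Y := ⟨hx, ball_subset_closedBall (hDM hxD)⟩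
  haveI : CompactSpace Y := isCompact_iff_compactSpace.1 hYc
  let xY : Y := ⟨x, hxY⟩
  have hcomp : connectedComponent xY = ⋂ s : { s : Set Y // IsClopen s ∧ xY ∈ s }, s :=
    connectedComponent_eq_iInter_isClopen xY
  have hcD : ∀ y ∈ connectedComponent xY, (y : ℂ) ∈ ball (0:ℂ) M := by
    intro y hy
    apply hDM
    have : Subtype.val '' connectedComponent xY ⊆ D := by
      refine (isPreconnected_connectedComponent.image _ continuous_subtype_val.continuousOn).subset_connectedComponentIn
        ⟨xY, mem_connectedComponent, rfl⟩ ?_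
      rintro _ ⟨y, -, rfl⟩
      exact y.2.1
    exact this ⟨y, hy, rfl⟩
  haveI : Nonempty { s : Set Y // IsClopen s ∧ xY ∈ s } := ⟨⟨univ, isClopen_univ, mem_univ _⟩⟩
  obtain ⟨⟨Z, hZ, hxZ⟩, hZs⟩ := exists_subset_nhds_of_compactSpace
    (V := fun s : { s : Set Y // IsClopen s ∧ xY ∈ s } => (s : Set Y))
    (U := Subtype.val ⁻¹' ball (0:ℂ) M) (by
      intro a b
      exact ⟨⟨a.1 ∩ b.1, a.2.1.inter b.2.1, a.2.2, b.2.2⟩, inter_subset_left, inter_subset_right⟩)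
    (fun s => s.2.1.isClosed) (by
      intro y hy
      rw [← hcomp] at hy
      exact (isOpen_ball.preimage continuous_subtype_val).mem_nhds (hcD y hy))
  obtain ⟨O', hO', hOZ⟩ := isOpen_induced_iff.1 hZ.isOpen
  have hres := hNC (Subtype.val '' Z) (by rintro _ ⟨y, -, rfl⟩; exact y.2.1)
    (hZ.isClosed.isCompact.image continuous_subtype_val)
    ⟨O' ∩ ball 0 M, hO'.inter isOpen_ball, by
      ext w
      constructor
      · rintro ⟨y, hy, rfl⟩
        refine ⟨⟨?_, hZs hy⟩, y.2.1⟩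
        rw [← hOZ] at hy; exact hy
      · rintro ⟨⟨h1, h2⟩, h3⟩
        refine ⟨⟨w, h3, ball_subset_closedBall h2⟩, ?_, rfl⟩
        rw [← hOZ]; exact h1⟩
  have : x ∈ Subtype.val '' Z := ⟨xY, hxZ, rfl⟩
  rw [hres] at this
  exact this

lemma ray_lemma {F : Set ℂ} (hF : IsClosed F) (hre : ∀ w ∈ F, w.re < 0) {b : ℂ} (hb : b ∈ F) :
    ∃ y ∈ connectedComponentIn F b, y ∈ closure Fᶜ := by
  let g : ℝ → ℂ := fun x => b + x
  have hg : Continuous g := by fun_prop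
  let T : Set ℝ := Icc 0 (-b.re) ∩ g ⁻¹' closure Fᶜ
  have hb0 := hre b hb
  have hT : IsCompact T := isCompact_Icc.inter_right (isClosed_closure.preimage hg)
  have hTn : T.Nonempty := by
    refine ⟨-b.re, ⟨by linarith, le_rfl⟩, subset_closure fun h => ?_⟩
    have := hre _ h
    simp [g] at this
  obtain ⟨m, hm, hmin⟩ := hT.exists_isLeast hTn
  have hIco : ∀ x ∈ Ico 0 m, g x ∈ F := by
    intro x hx
    by_contra hc
    have : x ∈ T := ⟨⟨hx.1, hx.2.le.trans hm.1.2⟩, subset_closure hc⟩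
    exact absurd (hmin this) (not_le.2 hx.2)
  have hm0 := hm.1.1
  have hIcc : ∀ x ∈ Icc 0 m, g x ∈ F := by
    rcases hm0.eq_or_lt with h | h
    · intro x hx
      have : x = 0 := le_antisymm (h ▸ hx.2) hx.1
      simpa [g, this] using hb
    · have : Icc 0 m ⊆ g ⁻¹' F := by
        rw [← closure_Ico h.ne]
        exact closure_minimal hIco (hF.preimage hg)
      exact this
  refine ⟨g m, ?_, hm.2⟩
  have hsub := (isPreconnected_Icc.image g hg.continuousOn).subset_connectedComponentIn (F := F)
    (x := b) (s := g '' Icc 0 m) ⟨0, ⟨le_rfl, hm0⟩, by simp [g]⟩ (by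
      rintro _ ⟨x, hx, rfl⟩; exact hIcc x hx)
  exact hsub ⟨m, ⟨hm0, le_rfl⟩, rfl⟩


lemma unb_subset {K : Set ℂ} : unbddComp K ⊆ Kᶜ := fun _ hz => hz.1

lemma unb_absorb {K V : Set ℂ} (hV : IsPreconnected V) (hVK : V ⊆ Kᶜ) {z : ℂ} (hz : z ∈ V)
    (hzU : z ∈ unbddComp K) : V ⊆ unbddComp K := by
  intro w hw
  have h1 : w ∈ connectedComponentIn Kᶜ z := hV.subset_connectedComponentIn hz hVK hw
  refine ⟨hVK hw, ?_⟩
  rw [← connectedComponentIn_eq h1]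
  exact hzU.2

lemma unb_isOpen {K : Set ℂ} (hK : IsClosed K) : IsOpen (unbddComp K) := by
  rw [isOpen_iff_mem_nhds]
  intro z hz
  have h1 : IsOpen (connectedComponentIn Kᶜ z) := hK.isOpen_compl.connectedComponentIn
  refine mem_of_superset (h1.mem_nhds (mem_connectedComponentIn hz.1)) ?_
  exact unb_absorb isPreconnected_connectedComponentIn (connectedComponentIn_subset _ _)
    (mem_connectedComponentIn hz.1) hz

lemma outer_eq : {z : ℂ | 1 ≤ ‖z‖} = Complex.exp '' {z | 0 ≤ z.re} := by
  ext z
  constructor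
  · intro hz
    have hz : 1 ≤ ‖z‖ := hz
    have hz0 : z ≠ 0 := by rintro rfl; simp at hz; linarith
    refine ⟨Complex.log z, ?_, Complex.exp_log hz0⟩
    show 0 ≤ (Complex.log z).re
    rw [Complex.log_re]
    exact Real.log_nonneg hz
  · rintro ⟨w, hw, rfl⟩
    show 1 ≤ ‖_‖
    rw [Complex.norm_exp]
    exact Real.one_le_exp hw

lemma halfplane_preconn : IsPreconnected {z : ℂ | 0 ≤ z.re} :=
  (convex_halfSpace_re_ge 0).isPreconnected

lemma outer_preconn : IsPreconnected {z : ℂ | 1 ≤ ‖z‖} := by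
  rw [outer_eq]
  exact halfplane_preconn.image _ Complex.continuous_exp.continuousOn

lemma unb_outer {K : Set ℂ} (hb : (unbddComp K)ᶜ ⊆ ball 0 1) {z : ℂ} (hz : 1 ≤ ‖z‖) :
    z ∈ unbddComp K := by
  by_contra h
  have := hb h
  rw [mem_ball_zero_iff] at this; linarith

lemma unb_preconn {K : Set ℂ} (hb : (unbddComp K)ᶜ ⊆ ball 0 1) :
    IsPreconnected (unbddComp K) := by
  have hsub : {z : ℂ | 1 ≤ ‖z‖} ⊆ unbddComp K := fun z hz => unb_outer hb hz
  have h1 : (1:ℂ) ∈ {z : ℂ | 1 ≤ ‖z‖} := by simp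
  refine isPreconnected_of_forall 1 fun z hz => ?_
  have h2 : ∃ w ∈ connectedComponentIn Kᶜ z, 1 ≤ ‖w‖ := by
    by_contra hcon
    push Not at hcon
    refine hz.2 ((isBounded_ball (x := (0:ℂ)) (r := 1)).subset fun w hw => ?_)
    rw [mem_ball_zero_iff]; exact hcon w hw
  obtain ⟨w, hw, hw1⟩ := h2
  refine ⟨connectedComponentIn Kᶜ z ∪ {z : ℂ | 1 ≤ ‖z‖}, ?_, Or.inr h1,
    Or.inl (mem_connectedComponentIn hz.1), ?_⟩
  · exact union_subset (unb_absorb isPreconnected_connectedComponentIn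
      (connectedComponentIn_subset _ _) (mem_connectedComponentIn hz.1) hz) hsub
  · exact IsPreconnected.union w hw hw1 isPreconnected_connectedComponentIn outer_preconn

/-- Facts about the lifted complementary domain. -/
structure HatFacts (K Xh Kh : Set ℂ) : Prop where
  closed : IsClosed Xh
  closedK : IsClosed Kh
  sub : Kh ⊆ Xh
  re_neg : ∀ z ∈ Xh, z.re < 0
  preconn : IsPreconnected Xhᶜ
  absorb : ∀ V : Set ℂ, IsPreconnected V → V ⊆ Khᶜ → ∀ z ∈ V, z ∈ Xhᶜ → V ⊆ Xhᶜ
  bd : ∀ y ∈ Xh, y ∈ closure Xhᶜ → y ∈ Kh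

lemma hatFacts {K : Set ℂ} (hK : IsCompact K) (h0 : 0 ∈ K)
    (hb : (unbddComp K)ᶜ ⊆ ball 0 1) :
    HatFacts K (Complex.exp ⁻¹' ((unbddComp K)ᶜ \ {0})) (Complex.exp ⁻¹' (K \ {0})) := by
  have e1 : Complex.exp ⁻¹' ((unbddComp K)ᶜ \ {0}) = (Complex.exp ⁻¹' (unbddComp K))ᶜ := by
    ext z; simp [Complex.exp_ne_zero]
  have e2 : Complex.exp ⁻¹' (K \ {0}) = Complex.exp ⁻¹' K := by
    ext z; simp [Complex.exp_ne_zero]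
  have hop := unb_isOpen hK.isClosed
  have habs : ∀ V : Set ℂ, IsPreconnected V → V ⊆ (Complex.exp ⁻¹' K)ᶜ → ∀ z ∈ V,
      z ∈ Complex.exp ⁻¹' (unbddComp K) → V ⊆ Complex.exp ⁻¹' (unbddComp K) := by
    intro V hV hVK z hz hzU
    have := unb_absorb (K := K) (hV.image _ Complex.continuous_exp.continuousOn)
      (by rintro _ ⟨w, hw, rfl⟩; exact hVK hw) (mem_image_of_mem _ hz) hzU
    exact fun w hw => this (mem_image_of_mem _ hw)
  have hclK : IsClosed (Complex.exp ⁻¹' K) := hK.isClosed.preimage Complex.continuous_exp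
  rw [e1, e2]
  refine ⟨(hop.preimage Complex.continuous_exp).isClosed_compl, hclK, ?_, ?_, ?_, ?_, ?_⟩
  · intro z hz hz2; exact unb_subset hz2 hz
  · intro z hz
    by_contra hcon
    push Not at hcon
    refine hz (unb_outer hb ?_)
    rw [Complex.norm_exp]; exact Real.one_le_exp hcon
  · rw [compl_compl]
    exact exp_preimage_preconn hop (unb_preconn hb) (fun z hz => unb_outer hb hz)
      (fun h => unb_subset h h0)
  · rw [compl_compl]; exact habs
  · rw [compl_compl]
    intro y hy hyc
    by_contra hyK
    have hyK : y ∈ (Complex.exp ⁻¹' K)ᶜ := hyK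
    have ho : IsOpen (connectedComponentIn (Complex.exp ⁻¹' K)ᶜ y) :=
      hclK.isOpen_compl.connectedComponentIn
    obtain ⟨w, hw1, hw2⟩ := mem_closure_iff.1 hyc _ ho (mem_connectedComponentIn hyK)
    exact hy (habs _ isPreconnected_connectedComponentIn (connectedComponentIn_subset _ _) w
      hw1 hw2 (mem_connectedComponentIn hyK))


lemma comp_frontier {G : Set ℂ} (hG : IsClosed G) (z : ℂ) :
    frontier (connectedComponentIn Gᶜ z) ⊆ G := by
  intro q hq
  by_contra hqG
  have hqG : q ∈ Gᶜ := hqG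
  have ho : ∀ x, IsOpen (connectedComponentIn Gᶜ x) := fun x =>
    hG.isOpen_compl.connectedComponentIn
  obtain ⟨w, hw1, hw2⟩ := mem_closure_iff.1 hq.1 _ (ho q) (mem_connectedComponentIn hqG)
  have e : connectedComponentIn Gᶜ q = connectedComponentIn Gᶜ z := by
    rw [connectedComponentIn_eq hw1, connectedComponentIn_eq hw2]
  refine hq.2 ?_
  rw [(ho z).interior_eq, ← e]
  exact mem_connectedComponentIn hqG

lemma borsuk {φ : ℂ → ℂ} {F : Set ℂ} (hF : IsClosed F) (hφ : PropOn φ F) (hinj : InjOn φ F)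
    (hre : ∀ w ∈ F, (φ w).re < 0) {z : ℂ} {f : ℂ → ℂ} (hf : NLog (fun w => rho (φ w)) φ F z f)
    (hz : z ∉ φ '' F) (hV : ∀ q ∈ connectedComponentIn (φ '' F)ᶜ z, q.re < 0) : False := by
  classical
  set G := φ '' F with hGdef
  have hG : IsClosed G := hφ.isClosed_image hF
  set V := connectedComponentIn Gᶜ z with hVdef
  have hVo : IsOpen V := hG.isOpen_compl.connectedComponentIn
  have hzV : z ∈ V := mem_connectedComponentIn hz
  have hN1 := NLog.one hφ hre
  -- the difference
  set u : ℂ → ℂ := fun w => f w - rho (φ w) with hu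
  have huc : ContinuousOn u F := hf.1.sub hN1.1
  have hut : Tendsto u (cocompact ℂ ⊓ 𝓟 F) (𝓝 0) := hf.2.2
  obtain ⟨Q, hQ, hQ1⟩ := tendsto_inf_mem (P := fun x => ‖x‖ < 1) hut (by
    filter_upwards [ball_mem_nhds (0:ℂ) one_pos] with x hx
    simpa using hx)
  have hQF : IsCompact (Q ∩ F) := hQ.inter_right hF
  obtain ⟨S, hS⟩ := (hQF.image_of_continuousOn (huc.mono inter_subset_right)).isBounded.exists_norm_le
  obtain ⟨M, hM⟩ := (hQF.image_of_continuousOn (hφ.1.mono inter_subset_right)).isBounded.exists_norm_le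
  -- Tietze
  have hemb : IsClosedEmbedding (F.domRestrict φ) := by
    refine IsClosedEmbedding.of_continuous_injective_isClosedMap hφ.1.domRestrict ?_
      (hφ.isProperMap hF).isClosedMap
    exact (injOn_iff_injective).1 hinj
  obtain ⟨g, hg⟩ := ContinuousMap.exists_extension' hemb ⟨F.domRestrict u, huc.domRestrict⟩
  have hgu : ∀ w (hw : w ∈ F), g (φ w) = u w := fun w hw => congrFun hg ⟨w, hw⟩
  let cc : ℂ → ℝ := fun q => 1 + |S| * max 0 (M + 1 - ‖q‖)
  have hcc1 : ∀ q, 1 ≤ cc q := fun q => by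
    have : 0 ≤ |S| * max 0 (M + 1 - ‖q‖) := by positivity
    simp only [cc]; linarith
  have hccc : Continuous cc := by fun_prop
  let cl : ℂ → ℝ := fun q => max (-cc q) (min (g q).im (cc q))
  have hclc : Continuous cl := by
    have := g.continuous
    fun_prop
  let v : ℂ → ℂ := fun q => (g q).re + cl q * Complex.I
  have hvc : Continuous v := by
    have := g.continuous
    fun_prop
  have hvu : ∀ w ∈ F, v (φ w) = u w := by
    intro w hw
    have h1 : |(u w).im| ≤ cc (φ w) := by
      by_cases hwQ : w ∈ Q
      · have h2 := hS _ (mem_image_of_mem _ ⟨hwQ, hw⟩)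
        have h3 := hM _ (mem_image_of_mem _ ⟨hwQ, hw⟩)
        have h4 : 1 ≤ max 0 (M + 1 - ‖φ w‖) := le_max_of_le_right (by linarith)
        have h5 := Complex.abs_im_le_norm (u w)
        have h6 := le_abs_self S
        have h7 : |S| * 1 ≤ |S| * max 0 (M + 1 - ‖φ w‖) :=
          mul_le_mul_of_nonneg_left h4 (abs_nonneg _)
        simp only [cc]; linarith
      · have := hQ1 w hw hwQ
        have h5 := Complex.abs_im_le_norm (u w)
        linarith [hcc1 (φ w)]
    rw [abs_le] at h1
    have : cl (φ w) = (u w).im := by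
      simp only [cl, hgu w hw]
      rw [min_eq_left h1.2, max_eq_right h1.1]
    simp only [v, this, hgu w hw]
    exact Complex.re_add_im _
  have hvim : ∀ q, M + 1 ≤ ‖q‖ → |(v q).im| ≤ 1 := by
    intro q hq
    have h1 : cc q = 1 := by
      simp only [cc]; rw [max_eq_left (by linarith)]; ring
    have h2 : (v q).im = cl q := by simp [v]
    rw [h2, abs_le]
    simp only [cl, h1]
    exact ⟨le_max_left _ _, max_le (by norm_num) (min_le_right _ _)⟩
  let Φ : ℂ → ℂ := fun q => if q ∈ V then Complex.exp (v q) * (1 - q) else z - q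
  have hΦc : Continuous Φ := by
    refine Continuous.if ?_ (by fun_prop) (by fun_prop)
    intro q hq
    obtain ⟨w, hw, rfl⟩ := comp_frontier hG z hq
    rw [hvu w hw, ← hf.2.1 w hw, ← hN1.2.1 w hw, ← Complex.exp_add]
    simp [hu]
  have hΦ0 : ∀ q, Φ q ≠ 0 := by
    intro q
    by_cases hq : q ∈ V
    · simp only [Φ, if_pos hq]
      refine mul_ne_zero (Complex.exp_ne_zero _) fun h => ?_
      have := hV q hq
      rw [← sub_eq_zero.1 h] at this; simp at this; linarith
    · simp only [Φ, if_neg hq]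
      exact sub_ne_zero.2 fun h => hq (h ▸ hzV)
  obtain ⟨Ψ, hΨc, hΨ⟩ := lift_exp hΦc hΦ0
  let N : ℝ := |M| + 3 + ‖z - 1‖
  have hN : 0 < N := by positivity
  let q : ℝ → ℂ := fun θ => 1 + N * Complex.exp (θ * Complex.I)
  have hqc : Continuous q := by fun_prop
  have hq1 : ∀ θ, 1 - q θ = -(N * Complex.exp (θ * Complex.I)) := fun θ => by simp [q]
  have hqN : ∀ θ, ‖1 - q θ‖ = N := fun θ => by
    rw [hq1, norm_neg, norm_mul, Complex.norm_exp_ofReal_mul_I, Complex.norm_real,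
      Real.norm_of_nonneg hN.le, mul_one]
  have hq0 : ∀ θ, 1 - q θ ≠ 0 := fun θ h => by
    have := hqN θ; rw [h, norm_zero] at this; linarith
  have hpos : ∀ θ, 0 < (Φ (q θ) / (1 - q θ)).re := by
    intro θ
    by_cases hq : q θ ∈ V
    · simp only [Φ, if_pos hq]
      rw [mul_div_cancel_right₀ _ (hq0 θ), Complex.exp_re]
      refine mul_pos (Real.exp_pos _) (Real.cos_pos_of_mem_Ioo ?_)
      have h1 : M + 1 ≤ ‖q θ‖ := by
        have h2 : ‖1 - q θ‖ ≤ ‖(1:ℂ)‖ + ‖q θ‖ := norm_sub_le _ _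
        rw [hqN, norm_one] at h2
        have := le_abs_self M
        have := norm_nonneg (z - 1)
        simp only [N] at h2; linarith
      have h2 := abs_le.1 (hvim _ h1)
      have := Real.pi_gt_three
      constructor <;> linarith
    · simp only [Φ, if_neg hq]
      refine ratio_slit ?_
      rw [hqN]
      have := abs_nonneg M
      simp only [N]; linarith
  let k : ℝ → ℂ := fun θ => Ψ (q θ) - Complex.log (Φ (q θ) / (1 - q θ)) - θ * Complex.I
    - Complex.log (-N)
  have hkc : Continuous k := by
    have h1 : Continuous fun θ => Complex.log (Φ (q θ) / (1 - q θ)) := by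
      refine Continuous.clog ?_ fun θ => Or.inl (hpos θ)
      exact (hΦc.comp hqc).div₀ (by fun_prop) hq0
    have h2 : Continuous fun θ => Ψ (q θ) := hΨc.comp hqc
    fun_prop
  have hk : ∀ θ, Complex.exp (k θ) = 1 := by
    intro θ
    simp only [k]
    rw [Complex.exp_sub, Complex.exp_sub, Complex.exp_sub, hΨ, Complex.exp_log, Complex.exp_log]
    · have := hΦ0 (q θ)
      have h2 := hq0 θ
      have h3 : Complex.exp (θ * Complex.I) ≠ 0 := Complex.exp_ne_zero _
      have h4 : (N:ℂ) ≠ 0 := by exact_mod_cast hN.ne'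
      rw [div_div_cancel₀ this, hq1]
      field_simp
    · simpa using hN.ne'
    · exact div_ne_zero (hΦ0 _) (hq0 θ)
  have := const_of_exp_one isPreconnected_univ hkc.continuousOn (fun θ _ => hk θ) 0 (mem_univ _)
    (2 * Real.pi) (mem_univ _)
  have hqq : q (2 * Real.pi) = q 0 := by simp [q]
  simp only [k, hqq] at this
  have h2 := congrArg Complex.im this
  simp at h2
  linarith [Real.pi_pos]


lemma bdLift_eq (X : Set ℂ) : bdLift X = Complex.exp ⁻¹' frontier X := by
  ext z; simp [bdLift, Complex.exp_ne_zero]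

lemma bdLift_closed (X : Set ℂ) : IsClosed (bdLift X) := by
  rw [bdLift_eq]; exact isClosed_frontier.preimage Complex.continuous_exp

lemma exp_shift (b : ℂ) (k : ℤ) :
    Complex.exp (b + k * (2 * Real.pi * Complex.I)) = Complex.exp b := by
  rw [Complex.exp_add, Complex.exp_int_mul_two_pi_mul_I, mul_one]

lemma bdLift_shift {X : Set ℂ} {b : ℂ} (hb : b ∈ bdLift X) (k : ℤ) :
    b + k * (2 * Real.pi * Complex.I) ∈ bdLift X := by
  rw [bdLift_eq] at hb ⊢
  simp only [mem_preimage, exp_shift] at hb ⊢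
  exact hb

section
variable {X : Set ℂ} {h H : ℂ → ℝ → ℂ}

lemma H_cont_t {K : Set ℂ}
    (hHcont : ContinuousOn (fun p : ℂ × ℝ => H p.1 p.2) (K ×ˢ Set.Icc 0 1))
    {b : ℂ} (hb : b ∈ K) : ContinuousOn (fun t => H b t) (Icc 0 1) :=
  hHcont.comp (f := fun t : ℝ => (b, t)) (by fun_prop) fun t ht => ⟨hb, ht⟩

lemma H_cont_b {K : Set ℂ}
    (hHcont : ContinuousOn (fun p : ℂ × ℝ => H p.1 p.2) (K ×ˢ Set.Icc 0 1))
    {t : ℝ} (ht : t ∈ Icc (0:ℝ) 1) : ContinuousOn (fun b => H b t) K :=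
  hHcont.comp (f := fun b : ℂ => (b, t)) (by fun_prop) fun b hb => ⟨hb, ht⟩

lemma H_shift
    (hHcont : ContinuousOn (fun p : ℂ × ℝ => H p.1 p.2) (bdLift X ×ˢ Set.Icc 0 1))
    (hH0 : ∀ z ∈ bdLift X, H z 0 = z)
    (hHlift : ∀ z ∈ bdLift X, ∀ t ∈ Set.Icc (0:ℝ) 1,
      Complex.exp (H z t) = h (Complex.exp z) t)
    {b : ℂ} (hb : b ∈ bdLift X) (k : ℤ) {t : ℝ} (ht : t ∈ Icc (0:ℝ) 1) :
    H (b + k * (2 * Real.pi * Complex.I)) t = H b t + k * (2 * Real.pi * Complex.I) := by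
  have hb' := bdLift_shift hb k
  have hne : h (Complex.exp b) t ≠ 0 := by
    rw [← hHlift b hb t ht]; exact Complex.exp_ne_zero _
  have := const_of_exp_one (S := Icc (0:ℝ) 1) isPreconnected_Icc
    (g := fun t => H (b + k * (2 * Real.pi * Complex.I)) t - (H b t + k * (2 * Real.pi * Complex.I)))
    ((H_cont_t hHcont hb').sub ((H_cont_t hHcont hb).add continuousOn_const))
    (fun s hs => by
      have hne : h (Complex.exp b) s ≠ 0 := by
        rw [← hHlift b hb s hs]; exact Complex.exp_ne_zero _
      rw [Complex.exp_sub, exp_shift, hHlift _ hb' s hs, hHlift _ hb s hs, exp_shift, div_self hne])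
    t ht 0 (by simp)
  simp only [hH0 _ hb', hH0 _ hb, sub_self] at this
  exact sub_eq_zero.1 this

lemma H_image
    (hHcont : ContinuousOn (fun p : ℂ × ℝ => H p.1 p.2) (bdLift X ×ˢ Set.Icc 0 1))
    (hH0 : ∀ z ∈ bdLift X, H z 0 = z)
    (hHlift : ∀ z ∈ bdLift X, ∀ t ∈ Set.Icc (0:ℝ) 1,
      Complex.exp (H z t) = h (Complex.exp z) t)
    (hfix : ∀ t ∈ Set.Icc (0:ℝ) 1, h 0 t = 0)
    {t : ℝ} (ht : t ∈ Icc (0:ℝ) 1) :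
    Complex.exp ⁻¹' (((fun z => h z t) '' frontier X) \ {0}) = (fun b => H b t) '' bdLift X := by
  ext z
  constructor
  · rintro ⟨⟨x, hx, hxz⟩, -⟩
    simp only at hxz
    have hx0 : x ≠ 0 := by
      rintro rfl
      rw [hfix t ht] at hxz
      exact Complex.exp_ne_zero z hxz.symm
    have hb : Complex.log x ∈ bdLift X := by
      rw [bdLift_eq, mem_preimage, Complex.exp_log hx0]; exact hx
    have h1 := hHlift _ hb t ht
    rw [Complex.exp_log hx0, hxz, eq_comm, Complex.exp_eq_exp_iff_exists_int] at h1
    obtain ⟨k, hk⟩ := h1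
    exact ⟨_, bdLift_shift hb k, by simp only; rw [H_shift hHcont hH0 hHlift hb k ht, hk]⟩
  · rintro ⟨b, hb, rfl⟩
    refine ⟨⟨Complex.exp b, ?_, (hHlift b hb t ht).symm⟩, Complex.exp_ne_zero _⟩
    rw [bdLift_eq] at hb; exact hb

/-- uniform properness -/
def UProp (K : Set ℂ) (H : ℂ → ℝ → ℂ) : Prop :=
  ∀ M : ℝ, ∃ Q : Set ℂ, IsCompact Q ∧ ∀ w ∈ K, w ∉ Q → ∀ t ∈ Icc (0:ℝ) 1, M < ‖H w t‖

lemma H_uprop (hXcpt : IsCompact X) (hXb : X ⊆ Metric.ball 0 1)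
    (hcont : ContinuousOn (fun p : ℂ × ℝ => h p.1 p.2) (frontier X ×ˢ Set.Icc 0 1))
    (hfix : ∀ t ∈ Set.Icc (0:ℝ) 1, h 0 t = 0)
    (hHcont : ContinuousOn (fun p : ℂ × ℝ => H p.1 p.2) (bdLift X ×ˢ Set.Icc 0 1))
    (hH0 : ∀ z ∈ bdLift X, H z 0 = z)
    (hHlift : ∀ z ∈ bdLift X, ∀ t ∈ Set.Icc (0:ℝ) 1,
      Complex.exp (H z t) = h (Complex.exp z) t) : UProp (bdLift X) H := by
  intro M
  have hfr : IsCompact (frontier X) := hXcpt.of_isClosed_subset isClosed_frontier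
    hXcpt.isClosed.frontier_subset
  have hfI : IsCompact (frontier X ×ˢ Icc (0:ℝ) 1) := hfr.prod isCompact_Icc
  obtain ⟨T, hT, hTe⟩ := (continuousOn_iff_isClosed.1 hcont.norm) (Ici (Real.exp (-M))) isClosed_Ici
  have hcomp : IsCompact ((fun p : ℂ × ℝ => ‖h p.1 p.2‖) ⁻¹' Ici (Real.exp (-M)) ∩
      frontier X ×ˢ Icc (0:ℝ) 1) := by
    rw [hTe]; exact hfI.inter_left hT
  obtain ⟨δ, hδ, hδ1⟩ : ∃ δ > 0, ∀ x ∈ frontier X, ∀ t ∈ Icc (0:ℝ) 1,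
      Real.exp (-M) ≤ ‖h x t‖ → δ ≤ ‖x‖ := by
    rcases ((fun p : ℂ × ℝ => ‖h p.1 p.2‖) ⁻¹' Ici (Real.exp (-M)) ∩
      frontier X ×ˢ Icc (0:ℝ) 1).eq_empty_or_nonempty with he | hne
    · refine ⟨1, one_pos, fun x hx t ht hxt => ?_⟩
      have : (x, t) ∈ ((fun p : ℂ × ℝ => ‖h p.1 p.2‖) ⁻¹' Ici (Real.exp (-M)) ∩
        frontier X ×ˢ Icc (0:ℝ) 1) := ⟨hxt, hx, ht⟩
      rw [he] at this; exact absurd this (notMem_empty _)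
    · obtain ⟨p, hp, hpm⟩ := hcomp.exists_isMinOn hne
        (f := fun p : ℂ × ℝ => ‖p.1‖) (by fun_prop)
      refine ⟨‖p.1‖, ?_, fun x hx t ht hxt => ?_⟩
      · refine norm_pos_iff.2 fun h0 => ?_
        have h1 : Real.exp (-M) ≤ ‖h p.1 p.2‖ := hp.1
        rw [h0, hfix _ hp.2.2, norm_zero] at h1
        linarith [Real.exp_pos (-M)]
      · exact hpm (show (x, t) ∈ _ from ⟨hxt, hx, ht⟩)
  set P : Set ℂ := bdLift X ∩ (Icc (Real.log δ) 0 ×ℂ Icc 0 (2 * Real.pi)) with hP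
  have hPc : IsCompact P := (isCompact_Icc.reProdIm isCompact_Icc).inter_left (bdLift_closed X)
  obtain ⟨D, hD⟩ := ((hPc.prod isCompact_Icc).image_of_continuousOn
    (f := fun p : ℂ × ℝ => H p.1 p.2 - p.1)
    ((hHcont.mono (prod_mono inter_subset_left subset_rfl)).sub continuous_fst.continuousOn)).isBounded.exists_norm_le
  refine ⟨closedBall 0 (M + D), isCompact_closedBall _ _, fun w hw hwQ t ht => ?_⟩
  by_contra hcon
  push Not at hcon
  apply hwQ
  have hwf : Complex.exp w ∈ frontier X := by rw [bdLift_eq] at hw; exact hw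
  have h1 : Real.exp (-M) ≤ ‖h (Complex.exp w) t‖ := by
    rw [← hHlift w hw t ht, Complex.norm_exp]
    refine Real.exp_le_exp.2 ?_
    have := (abs_le.1 (Complex.abs_re_le_norm (H w t))).1
    linarith
  have h2 := hδ1 _ hwf t ht h1
  rw [Complex.norm_exp] at h2
  have h3 : Real.log δ ≤ w.re := (Real.log_le_iff_le_exp hδ).2 h2
  have h4 : w.re ≤ 0 := by
    have := hXb (hXcpt.isClosed.frontier_subset hwf)
    rw [mem_ball_zero_iff, Complex.norm_exp, Real.exp_lt_one_iff] at this
    exact this.le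
  obtain ⟨k, hk, -⟩ := existsUnique_add_zsmul_mem_Ico Real.two_pi_pos w.im 0
  have hwk := bdLift_shift hw k
  have hPk : w + k * (2 * Real.pi * Complex.I) ∈ P := by
    refine ⟨hwk, ?_⟩
    rw [Complex.mem_reProdIm]
    simp only [zsmul_eq_mul, zero_add] at hk
    constructor
    · simpa using ⟨h3, h4⟩
    · simpa using ⟨hk.1, hk.2.le⟩
  have h5 := hD _ (mem_image_of_mem _ (show (w + k * (2 * Real.pi * Complex.I), t) ∈ _ from ⟨hPk, ht⟩))
  simp only [H_shift hHcont hH0 hHlift hw k ht] at h5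
  rw [add_sub_add_right_eq_sub] at h5
  rw [mem_closedBall_zero_iff]
  have h6 : ‖w‖ ≤ ‖H w t‖ + ‖H w t - w‖ := by
    have := norm_sub_le (H w t) (H w t - w)
    simpa using this
  linarith

lemma UProp.propOn {K : Set ℂ} (hu : UProp K H)
    (hHcont : ContinuousOn (fun p : ℂ × ℝ => H p.1 p.2) (K ×ˢ Set.Icc 0 1))
    {t : ℝ} (ht : t ∈ Icc (0:ℝ) 1) : PropOn (fun b => H b t) K := by
  refine ⟨H_cont_b hHcont ht, ?_⟩
  have e : (cocompact ℂ : Filter ℂ) = Bornology.cobounded ℂ := Metric.cobounded_eq_cocompact.symm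
  suffices h : Tendsto (fun b => H b t) (cocompact ℂ ⊓ 𝓟 K) (Bornology.cobounded ℂ) by
    rw [← e] at h; exact h
  rw [← tendsto_norm_atTop_iff_cobounded, Filter.tendsto_atTop]
  intro M
  obtain ⟨Q, hQ, h1⟩ := hu M
  rw [eventually_inf_principal]
  filter_upwards [hQ.compl_mem_cocompact] with w hw hwK
  exact (h1 w hwK hw t ht).le
end


lemma homotopy_log {K : Set ℂ} {ψ : ℂ → ℝ → ℂ} {f0 : ℂ → ℂ}
    (hc : ContinuousOn (fun p : ℂ × ℝ => ψ p.1 p.2) (K ×ˢ Set.Icc 0 1))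
    (hne : ∀ b ∈ K, ∀ t ∈ Icc (0:ℝ) 1, ψ b t ≠ 0)
    (hf : ContinuousOn f0 K) (h0 : ∀ b ∈ K, Complex.exp (f0 b) = ψ b 0) :
    ∃ L : ℂ → ℝ → ℂ, ContinuousOn (fun p : ℂ × ℝ => L p.1 p.2) (K ×ˢ Set.Icc 0 1) ∧
      (∀ b ∈ K, ∀ t ∈ Icc (0:ℝ) 1, Complex.exp (L b t) = ψ b t) ∧ ∀ b ∈ K, L b 0 = f0 b := by
  classical
  have hcψ : Continuous fun p : unitInterval × K => ψ p.2 p.1 :=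
    hc.comp_continuous (f := fun p : unitInterval × K => ((p.2 : ℂ), (p.1 : ℝ))) (by fun_prop)
      fun p => ⟨p.2.2, p.1.2⟩
  let Hm : C(unitInterval × K, {z : ℂ // z ≠ 0}) :=
    ⟨fun p => ⟨ψ p.2 p.1, hne _ p.2.2 _ p.1.2⟩, hcψ.subtype_mk _⟩
  let fm : C(K, ℂ) := ⟨K.domRestrict f0, hf.domRestrict⟩
  have hz : ∀ a, Hm (0, a) = (fun z => (⟨Complex.exp z, Complex.exp_ne_zero z⟩ : {z : ℂ // z ≠ 0})) (fm a) := by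
    intro a
    apply Subtype.ext
    exact (h0 a a.2).symm
  let G := Complex.isCoveringMap_exp.liftHomotopy Hm fm hz
  have hG1 := Complex.isCoveringMap_exp.liftHomotopy_lifts Hm fm hz
  have hG0 := Complex.isCoveringMap_exp.liftHomotopy_zero Hm fm hz
  refine ⟨fun b t => if h : b ∈ K ∧ t ∈ Icc (0:ℝ) 1 then G (⟨t, h.2⟩, ⟨b, h.1⟩) else 0, ?_, ?_, ?_⟩
  · rw [continuousOn_iff_continuous_domRestrict]
    have : Continuous fun p : (K ×ˢ Icc (0:ℝ) 1 : Set (ℂ × ℝ)) =>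
        G (⟨p.1.2, p.2.2⟩, ⟨p.1.1, p.2.1⟩) := by
      refine G.continuous.comp ?_
      refine Continuous.prodMk ?_ ?_
      · exact (continuous_snd.comp continuous_subtype_val).subtype_mk _
      · exact (continuous_fst.comp continuous_subtype_val).subtype_mk _
    refine this.congr fun p => ?_
    simp only [domRestrict_apply]
    rw [dif_pos ⟨p.2.1, p.2.2⟩]
  · intro b hb t ht
    simp only
    rw [dif_pos ⟨hb, ht⟩]
    exact congrArg Subtype.val (congrFun hG1 (⟨t, ht⟩, ⟨b, hb⟩))
  · intro b hb
    have h01 : (0:ℝ) ∈ Icc (0:ℝ) 1 := by simp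
    simp only
    rw [dif_pos ⟨hb, h01⟩]
    exact hG0 ⟨b, hb⟩

lemma iso_log {K : Set ℂ} {H : ℂ → ℝ → ℂ} {γ : ℝ → ℂ} {f0 : ℂ → ℂ}
    (hc : ContinuousOn (fun p : ℂ × ℝ => H p.1 p.2) (K ×ˢ Set.Icc 0 1))
    (hu : UProp K H) (hre : ∀ b ∈ K, ∀ t ∈ Icc (0:ℝ) 1, (H b t).re < 0)
    (hH0 : ∀ b ∈ K, H b 0 = b)
    (hγ : ContinuousOn γ (Icc 0 1)) (hne : ∀ b ∈ K, ∀ t ∈ Icc (0:ℝ) 1, γ t ≠ H b t)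
    (hf : NLog rho id K (γ 0) f0) :
    ∃ L : ℂ → ℝ → ℂ, (∀ b ∈ K, L b 0 = f0 b) ∧
      (∀ b ∈ K, ContinuousOn (fun t => L b t) (Icc 0 1)) ∧
      ∀ t ∈ Icc (0:ℝ) 1, NLog (fun w => rho (H w t)) (fun w => H w t) K (γ t) (fun b => L b t) := by
  have hne' : ∀ b ∈ K, ∀ t ∈ Icc (0:ℝ) 1, γ t - H b t ≠ 0 := fun b hb t ht =>
    sub_ne_zero.2 (hne b hb t ht)
  have h01 : (0:ℝ) ∈ Icc (0:ℝ) 1 := by simp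
  obtain ⟨L, hLc, hLe, hL0⟩ := homotopy_log (ψ := fun b t => γ t - H b t) (K := K) (f0 := f0)
    ((hγ.comp continuous_snd.continuousOn fun p hp => hp.2).sub hc) hne' hf.1
    (fun b hb => by rw [hf.2.1 b hb, hH0 b hb, id])
  refine ⟨L, hL0, fun b hb => H_cont_t hLc hb, ?_⟩
  obtain ⟨M, hM⟩ := (isCompact_Icc.image_of_continuousOn
    (hγ.sub (continuousOn_const (c := (1:ℂ))))).isBounded.exists_norm_le
  obtain ⟨Q1, hQ1, hQ1'⟩ := hu (M + 1)
  set R : ℂ → ℝ → ℂ := fun b t => rho (H b t) + Complex.log ((γ t - H b t) / (1 - H b t)) with hR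
  have hp : ∀ b ∈ K, ∀ t ∈ Icc (0:ℝ) 1, 0 < (1 - H b t).re := fun b hb t ht => by
    have := hre b hb t ht; simp; linarith
  have hp0 : ∀ b ∈ K, ∀ t ∈ Icc (0:ℝ) 1, 1 - H b t ≠ 0 := fun b hb t ht h => by
    have := hp b hb t ht; rw [h] at this; simp at this
  have hratio : ∀ b ∈ K, b ∉ Q1 → ∀ t ∈ Icc (0:ℝ) 1,
      0 < ((γ t - H b t) / (1 - H b t)).re := by
    intro b hb hbQ t ht
    refine ratio_slit ?_
    have h1 := hM _ (mem_image_of_mem _ ht)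
    have h2 := hQ1' b hb hbQ t ht
    have h3 : ‖H b t‖ ≤ ‖(1:ℂ)‖ + ‖1 - H b t‖ := by
      have := norm_sub_le 1 (1 - H b t)
      simpa using this
    rw [norm_one] at h3
    change ‖γ t - 1‖ ≤ M at h1
    linarith
  have hRc : ∀ b ∈ K, b ∉ Q1 → ContinuousOn (fun t => R b t) (Icc 0 1) := by
    intro b hb hbQ
    have h1 := H_cont_t hc hb
    have h2 : ContinuousOn (fun t => 1 - H b t) (Icc 0 1) := continuousOn_const.sub h1
    refine (h2.clog fun t ht => Or.inl (hp b hb t ht)).add ?_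
    exact ((hγ.sub h1).div h2 (hp0 b hb)).clog fun t ht => Or.inl (hratio b hb hbQ t ht)
  have hRe : ∀ b ∈ K, ∀ t ∈ Icc (0:ℝ) 1, Complex.exp (R b t) = γ t - H b t := by
    intro b hb t ht
    have := hp0 b hb t ht
    simp only [hR, rho]
    rw [Complex.exp_add, Complex.exp_log this,
      Complex.exp_log (div_ne_zero (hne' b hb t ht) this), mul_div_cancel₀ _ this]
  have hlim : Tendsto (fun b => (f0 b - rho b) - Complex.log ((γ 0 - b) / (1 - b)))
      (cocompact ℂ ⊓ 𝓟 K) (𝓝 0) := by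
    have h1 : Tendsto (fun w : ℂ => Complex.log ((γ 0 - w) / (1 - w))) (cocompact ℂ ⊓ 𝓟 K) (𝓝 0) :=
      (tendsto_log_ratio 1 (γ 0)).mono_left inf_le_left
    have := hf.2.2.sub h1
    simpa using this
  obtain ⟨Q2, hQ2, hQ2'⟩ := tendsto_inf_mem (P := fun x => ‖x‖ < 1) hlim (by
    filter_upwards [ball_mem_nhds (0:ℂ) one_pos] with x hx
    simpa using hx)
  have hLR : ∀ b ∈ K, b ∉ Q1 → b ∉ Q2 → ∀ t ∈ Icc (0:ℝ) 1, L b t = R b t := by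
    intro b hb hb1 hb2 t ht
    have hexp : ∀ t ∈ Icc (0:ℝ) 1, Complex.exp (L b t - R b t) = 1 := fun t ht => by
      rw [Complex.exp_sub, hLe b hb t ht, hRe b hb t ht, div_self (hne' b hb t ht)]
    have := const_of_exp_one (S := Icc (0:ℝ) 1) isPreconnected_Icc (g := fun t => L b t - R b t)
      ((H_cont_t hLc hb).sub (hRc b hb hb1)) hexp t ht 0 h01
    have h2 : L b 0 - R b 0 = 0 := by
      refine eq_zero_of_exp_one (hexp 0 h01) ?_
      rw [hL0 b hb]
      simp only [hR, hH0 b hb]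
      rw [← sub_sub]
      exact hQ2' b hb hb2
    rw [h2] at this
    exact sub_eq_zero.1 this
  intro t ht
  refine ⟨H_cont_b hLc ht, fun b hb => hLe b hb t ht, ?_⟩
  have h1 := (tendsto_log_ratio 1 (γ t)).comp (hu.propOn hc ht).2
  refine h1.congr' ?_
  rw [EventuallyEq, eventually_inf_principal]
  filter_upwards [(hQ1.union hQ2).compl_mem_cocompact] with b hb hbK
  rw [hLR b hbK (fun h => hb (Or.inl h)) (fun h => hb (Or.inr h)) t ht]
  simp [hR]


lemma compl_good {A B : Set ℂ} (hA : IsClosed A)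
    (hAr : ∀ w ∈ A, w.re < 0) (hBr : ∀ w ∈ B, w.re < 0) (hpc : IsPreconnected (A ∪ B)ᶜ) :
    (A ∪ B)ᶜ ⊆ GoodSet rho id A := by
  have h1 : (1:ℂ) ∈ (A ∪ B)ᶜ := by
    rintro (h | h)
    · have := hAr _ h; simp at this; linarith
    · have := hBr _ h; simp at this; linarith
  refine good_preconn (propOn_id A) hA hpc ?_ h1 ⟨_, NLog.base hAr (by simp)⟩
  intro w hw; rw [image_id]; exact fun h => hw (Or.inl h)

lemma comp_good {A B : Set ℂ} (hA : IsClosed A) (hB : IsClosed B) (hd : Disjoint A B)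
    (hAr : ∀ w ∈ A, w.re < 0) (hBr : ∀ w ∈ B, w.re < 0) (hpc : IsPreconnected (A ∪ B)ᶜ)
    {b : ℂ} (hb : b ∈ B) : connectedComponentIn B b ⊆ GoodSet rho id A := by
  have hnA : ∀ w ∈ connectedComponentIn B b, w ∉ id '' A := by
    intro w hw hwA
    rw [image_id] at hwA
    exact hd.le_bot ⟨hwA, connectedComponentIn_subset _ _ hw⟩
  obtain ⟨y, hyD, hyc⟩ := ray_lemma hB hBr hb
  have hyA : y ∉ A := by have := hnA y hyD; rwa [image_id] at this
  have h1 : y ∈ closure (A ∪ B)ᶜ := by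
    rw [compl_union]
    exact hA.isOpen_compl.inter_closure ⟨hyA, hyc⟩
  have h2 : y ∈ GoodSet rho id A :=
    good_closure (propOn_id A) hA (closure_mono (compl_good hA hAr hBr hpc) h1) (hnA y hyD)
  exact good_preconn (propOn_id A) hA isPreconnected_connectedComponentIn hnA hyD h2

lemma star {A B : Set ℂ} (hA : IsClosed A) (hB : IsClosed B) (hd : Disjoint A B)
    (hAr : ∀ w ∈ A, w.re < 0) (hBr : ∀ w ∈ B, w.re < 0) (hpc : IsPreconnected (A ∪ B)ᶜ)
    (hNA : NC A) (hNB : NC B) (habove : LiesAboveSets A B) {a b : ℂ} (ha : a ∈ A) (hb : b ∈ B) :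
    lam B a b = lam A b a + Real.pi * Complex.I := by
  set C := connectedComponentIn A a with hC
  set D := connectedComponentIn B b with hD
  have hDg : D ⊆ GoodSet rho id A := comp_good hA hB hd hAr hBr hpc hb
  have hCg : C ⊆ GoodSet rho id B := by
    rw [union_comm] at hpc
    exact comp_good hB hA hd.symm hBr hAr hpc ha
  have haC : a ∈ C := mem_connectedComponentIn ha
  have hbD : b ∈ D := mem_connectedComponentIn hb
  have hCA : C ⊆ A := connectedComponentIn_subset _ _
  have hDB : D ⊆ B := connectedComponentIn_subset _ _
  have hNC : NC C := NC_component hA hNA ha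
  have hND : NC D := NC_component hB hNB hb
  have hCc : IsClosed C := isClosed_comp hA a
  have hDc : IsClosed D := isClosed_comp hB b
  obtain ⟨s, hs, hv⟩ := habove C ⟨a, ha, rfl⟩ D ⟨b, hb, rfl⟩
  have key := above_key hCc hDc hNC hND (fun w hw => hAr w (hCA hw)) (fun w hw => hBr w (hDB hw))
    hs hv haC
  have hs0 : s 0 ∈ D := hs.2.2.1
  rw [lam_eq hND hDc ((lam_spec (hCg haC)).mono hDB) _ hs0,
    lam_eq hNC hCc ((lam_spec (hDg hs0)).mono hCA) _ haC] at key
  have := const_of_exp_one (S := D) isPreconnected_connectedComponentIn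
    (g := fun w => lam B a w - (lam A w a + Real.pi * Complex.I))
    (((lam_spec (hCg haC)).1.mono hDB).sub
      (((lam_cont hNA hA ha).mono hDg).add continuousOn_const))
    (fun w hw => by
      have h1 := (lam_spec (hCg haC)).2.1 w (hDB hw)
      have h2 := (lam_spec (hDg hw)).2.1 a ha
      have h3 : a - w ≠ 0 := by
        rw [id] at h1; rw [← h1]; exact Complex.exp_ne_zero _
      rw [Complex.exp_sub, Complex.exp_add, h1, h2, Complex.exp_pi_mul_I, id, id]
      rw [mul_neg_one, neg_sub, div_self h3]) b hbD (s 0) hs0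
  rw [key, sub_self] at this
  exact sub_eq_zero.1 this


lemma NLog.glue {ρ φ : ℂ → ℂ} {F1 F2 : Set ℂ} {z : ℂ} {f g : ℂ → ℂ} (h1 : IsClosed F1)
    (h2 : IsClosed F2) (hd : Disjoint F1 F2) (hf : NLog ρ φ F1 z f) (hg : NLog ρ φ F2 z g) :
    ∃ k, NLog ρ φ (F1 ∪ F2) z k := by
  classical
  let k : ℂ → ℂ := fun w => if w ∈ F1 then f w else g w
  have k1 : ∀ w ∈ F1, k w = f w := fun w hw => if_pos hw
  have k2 : ∀ w ∈ F2, k w = g w := fun w hw => if_neg fun h => hd.le_bot ⟨h, hw⟩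
  refine ⟨k, ContinuousOn.union_of_isClosed (hf.1.congr k1) (hg.1.congr k2) h1 h2, ?_, ?_⟩
  · rintro w (hw | hw)
    · rw [k1 w hw]; exact hf.2.1 w hw
    · rw [k2 w hw]; exact hg.2.1 w hw
  · rw [← sup_principal, inf_sup_left, tendsto_sup]
    constructor
    · refine hf.2.2.congr' ?_
      rw [EventuallyEq, eventually_inf_principal]
      exact Eventually.of_forall fun w hw => by rw [k1 w hw]
    · refine hg.2.2.congr' ?_
      rw [EventuallyEq, eventually_inf_principal]
      exact Eventually.of_forall fun w hw => by rw [k2 w hw]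

/-- The time `t` situation. -/
structure TimeT (φ : ℂ → ℂ) (KA KB Xh : Set ℂ) : Prop where
  clA : IsClosed KA
  clB : IsClosed KB
  disj : Disjoint KA KB
  ncA : NC KA
  ncB : NC KB
  prop : PropOn φ (KA ∪ KB)
  inj : InjOn φ (KA ∪ KB)
  hat : HatFacts (φ '' (KA ∪ KB)) Xh (φ '' (KA ∪ KB))
  goodA : ∀ a ∈ KA, φ a ∈ GoodSet (fun w => rho (φ w)) φ KB
  goodB : ∀ b ∈ KB, φ b ∈ GoodSet (fun w => rho (φ w)) φ KA

namespace TimeT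
variable {φ : ℂ → ℂ} {KA KB Xh : Set ℂ}

lemma symm (T : TimeT φ KA KB Xh) : TimeT φ KB KA Xh := by
  have e := union_comm KA KB
  exact ⟨T.clB, T.clA, T.disj.symm, T.ncB, T.ncA, e ▸ T.prop, e ▸ T.inj, e ▸ T.hat, T.goodB, T.goodA⟩

lemma re_neg (T : TimeT φ KA KB Xh) : ∀ w ∈ KA ∪ KB, (φ w).re < 0 := fun w hw =>
  T.hat.re_neg _ (T.hat.sub (mem_image_of_mem _ hw))

lemma propA (T : TimeT φ KA KB Xh) : PropOn φ KA := T.prop.mono subset_union_left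

lemma one_good (T : TimeT φ KA KB Xh) : (1:ℂ) ∈ GoodSet (fun w => rho (φ w)) φ KA :=
  ⟨_, NLog.one T.propA fun w hw => T.re_neg w (Or.inl hw)⟩

lemma out_good (T : TimeT φ KA KB Xh) : Xhᶜ ⊆ GoodSet (fun w => rho (φ w)) φ KA := by
  refine good_preconn T.propA T.clA T.hat.preconn ?_ (z := 1) ?_ T.one_good
  · rintro w hw ⟨a, ha, rfl⟩
    exact hw (T.hat.sub (mem_image_of_mem _ (Or.inl ha)))
  · intro h; have := T.hat.re_neg _ h; simp at this; linarith

lemma not_both (T : TimeT φ KA KB Xh) {z : ℂ} (hz : z ∈ Xh)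
    (hA : z ∈ GoodSet (fun w => rho (φ w)) φ KA) (hB : z ∈ GoodSet (fun w => rho (φ w)) φ KB) :
    False := by
  have hzn : z ∉ φ '' (KA ∪ KB) := by
    rw [image_union]
    rintro (h | h)
    · exact good_not_mem hA h
    · exact good_not_mem hB h
  obtain ⟨f, hf⟩ := hA
  obtain ⟨g, hg⟩ := hB
  obtain ⟨k, hk⟩ := hf.glue T.clA T.clB T.disj hg
  refine borsuk (T.clA.union T.clB) T.prop T.inj T.re_neg hk hzn ?_
  intro q hq
  by_contra hcon
  have hqX : q ∈ Xhᶜ := fun h => hcon (T.hat.re_neg q h)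
  exact T.hat.absorb _ isPreconnected_connectedComponentIn (connectedComponentIn_subset _ _) q hq hqX
    (mem_connectedComponentIn hzn) hz

lemma cover_aux (T : TimeT φ KA KB Xh) {z : ℂ} (hA : z ∉ GoodSet (fun w => rho (φ w)) φ KA) :
    ∀ w ∈ connectedComponentIn (φ '' KA)ᶜ z, w ∉ GoodSet (fun w => rho (φ w)) φ KA := by
  intro w hw hwG
  have hz : z ∈ (φ '' KA)ᶜ := by
    by_contra h
    rw [connectedComponentIn_eq_empty h] at hw; exact hw
  exact hA (good_preconn T.propA T.clA isPreconnected_connectedComponentIn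
    (fun v hv => connectedComponentIn_subset _ _ hv) hw hwG (mem_connectedComponentIn hz))

lemma cover_sub (T : TimeT φ KA KB Xh) {z : ℂ} (hA : z ∉ GoodSet (fun w => rho (φ w)) φ KA)
    (hz : z ∈ (φ '' KA)ᶜ) :
    connectedComponentIn (φ '' KA)ᶜ z ⊆ connectedComponentIn (φ '' KB)ᶜ z := by
  refine isPreconnected_connectedComponentIn.subset_connectedComponentIn
    (mem_connectedComponentIn hz) ?_
  rintro w hw ⟨b, hb, rfl⟩
  exact T.cover_aux hA _ hw (T.goodB b hb)

lemma cover (T : TimeT φ KA KB Xh) {z : ℂ}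
    (hA : z ∉ GoodSet (fun w => rho (φ w)) φ KA) (hB : z ∉ GoodSet (fun w => rho (φ w)) φ KB) :
    False := by
  have hzA : z ∈ (φ '' KA)ᶜ := by
    rintro ⟨a, ha, rfl⟩; exact hB (T.goodA a ha)
  have hzB : z ∈ (φ '' KB)ᶜ := by
    rintro ⟨a, ha, rfl⟩; exact hA (T.goodB a ha)
  have e : connectedComponentIn (φ '' KA)ᶜ z = connectedComponentIn (φ '' KB)ᶜ z :=
    (T.cover_sub hA hzA).antisymm (T.symm.cover_sub hB hzB)
  have hcA := T.propA.isClosed_image T.clA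
  have hcB := T.symm.propA.isClosed_image T.clB
  have hfr : frontier (connectedComponentIn (φ '' KA)ᶜ z) = ∅ := by
    rw [eq_empty_iff_forall_notMem]
    intro q hq
    obtain ⟨a, ha, rfl⟩ := comp_frontier hcA z hq
    rw [e] at hq
    obtain ⟨b, hb, hab⟩ := comp_frontier hcB z hq
    have := T.inj (Or.inr hb) (Or.inl ha) hab
    subst this
    exact T.disj.le_bot ⟨ha, hb⟩
  have hcl : IsClopen (connectedComponentIn (φ '' KA)ᶜ z) := isClopen_iff_frontier_eq_empty.2 hfr
  have hu := hcl.eq_univ ⟨z, mem_connectedComponentIn hzA⟩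
  exact T.cover_aux hA 1 (hu ▸ mem_univ _) T.one_good

/-- The union of components -/
def pieces (φ : ℂ → ℂ) (KA Xh : Set ℂ) : Set ℂ := ⋃ x ∈ KA, connectedComponentIn Xh (φ x)

lemma pieces_sub (T : TimeT φ KA KB Xh) :
    pieces φ KA Xh ⊆ Xh \ GoodSet (fun w => rho (φ w)) φ KA := by
  intro w hw
  simp only [pieces, mem_iUnion] at hw
  obtain ⟨a, ha, hw⟩ := hw
  have hX := connectedComponentIn_subset _ _ hw
  refine ⟨hX, fun hG => ?_⟩
  have haX : φ a ∈ Xh := T.hat.sub (mem_image_of_mem _ (Or.inl ha))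
  have h1 := isPreconnected_closed_iff.1 (isPreconnected_connectedComponentIn (F := Xh) (x := φ a))
    (Xh \ GoodSet (fun w => rho (φ w)) φ KA) (Xh \ GoodSet (fun w => rho (φ w)) φ KB)
    (T.hat.closed.sdiff (good_isOpen T.propA T.clA))
    (T.hat.closed.sdiff (good_isOpen T.symm.propA T.clB))
    (fun v hv => by
      have hvX := connectedComponentIn_subset _ _ hv
      by_cases h : v ∈ GoodSet (fun w => rho (φ w)) φ KA
      · exact Or.inr ⟨hvX, fun h' => T.not_both hvX h h'⟩
      · exact Or.inl ⟨hvX, h⟩)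
    ⟨φ a, mem_connectedComponentIn haX, haX, fun h => good_not_mem h (mem_image_of_mem _ ha)⟩
    ⟨w, hw, hX, fun h => T.not_both hX hG h⟩
  obtain ⟨v, -, ⟨-, hv1⟩, -, hv2⟩ := h1
  exact T.cover hv1 hv2

lemma pieces_cover (T : TimeT φ KA KB Xh) : Xh = pieces φ KA Xh ∪ pieces φ KB Xh := by
  apply Subset.antisymm
  · intro z hz
    obtain ⟨y, hy, hyc⟩ := ray_lemma T.hat.closed T.hat.re_neg hz
    obtain ⟨w, hw, rfl⟩ := T.hat.bd y (connectedComponentIn_subset _ _ hy) hyc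
    have e := connectedComponentIn_eq hy
    have hzc : z ∈ connectedComponentIn Xh (φ w) := e ▸ mem_connectedComponentIn hz
    simp only [pieces, mem_union, mem_iUnion]
    rcases hw with hw | hw
    · exact Or.inl ⟨w, hw, hzc⟩
    · exact Or.inr ⟨w, hw, hzc⟩
  · exact union_subset (T.pieces_sub.trans diff_subset) (T.symm.pieces_sub.trans diff_subset)

lemma pieces_eq (T : TimeT φ KA KB Xh) :
    pieces φ KA Xh = Xh \ GoodSet (fun w => rho (φ w)) φ KA := by
  refine T.pieces_sub.antisymm fun z hz => ?_
  have := T.pieces_cover.subset hz.1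
  rcases this with h | h
  · exact h
  · exact (T.cover hz.2 (T.symm.pieces_sub h).2).elim

lemma pieces_closed (T : TimeT φ KA KB Xh) : IsClosed (pieces φ KA Xh) := by
  rw [T.pieces_eq]
  exact T.hat.closed.sdiff (good_isOpen T.propA T.clA)

lemma pieces_disj (T : TimeT φ KA KB Xh) : Disjoint (pieces φ KA Xh) (pieces φ KB Xh) := by
  rw [Set.disjoint_left]
  intro z hA hB
  exact T.cover (T.pieces_sub hA).2 (T.symm.pieces_sub hB).2

end TimeT


lemma PropOn.compact_pre {φ : ℂ → ℂ} {F S : Set ℂ} (h : PropOn φ F) (hF : IsClosed F)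
    (hS : IsCompact S) : IsCompact {w | w ∈ F ∧ φ w ∈ S} := by
  have h1 := ((h.isProperMap hF).isCompact_preimage hS).image continuous_subtype_val
  convert h1 using 1
  ext w
  constructor
  · rintro ⟨hw, hwS⟩
    exact ⟨⟨w, hw⟩, hwS, rfl⟩
  · rintro ⟨⟨v, hv⟩, hvS, rfl⟩
    exact ⟨hv, hvS⟩

namespace TimeT
variable {φ : ℂ → ℂ} {KA KB Xh : Set ℂ}

/-- Points of a piece on the critical circle come from boundary points. -/
lemma on_circle (T : TimeT φ KA KB Xh) {z p : ℂ} (hz : z ∉ Xh) (hp : p ∈ pieces φ KA Xh)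
    (hpS : p ∈ sphere z (infDist z Xh)) : ∃ a ∈ KA, φ a = p := by
  have hpX := (T.pieces_sub hp).1
  have hr : 0 < infDist z Xh := (T.hat.closed.notMem_iff_infDist_pos ⟨p, hpX⟩).1 hz
  have hb : ball z (infDist z Xh) ⊆ Xhᶜ := fun w hw hwX => by
    have := infDist_le_dist_of_mem hwX (x := z)
    rw [mem_ball, dist_comm] at hw; linarith
  have hpc : p ∈ closure Xhᶜ := by
    refine closure_mono hb ?_
    rw [closure_ball z hr.ne']
    exact sphere_subset_closedBall hpS
  obtain ⟨w, hw, rfl⟩ := T.hat.bd p hpX hpc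
  rcases hw with hw | hw
  · exact ⟨w, hw, rfl⟩
  · exact ((T.pieces_sub hp).2 (T.goodB w hw)).elim

/-- perturbing the log from the centre to a point on the circle. -/
lemma circle_log (T : TimeT φ KA KB Xh) {z : ℂ} (hz : z ∉ Xh) {l f : ℂ → ℂ}
    (hl : NLog (fun w => rho (φ w)) φ KB z l) {a b : ℂ} (ha : a ∈ KA) (hb : b ∈ KB)
    (haS : φ a ∈ sphere z (infDist z Xh))
    (hf : NLog (fun w => rho (φ w)) φ KB (φ a) f) : |(f b).im - (l b).im| < Real.pi / 2 := by
  have hpos : ∀ w ∈ KB, 0 < ((φ a - φ w) / (z - φ w)).re := by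
    intro w hw
    have hwX : φ w ∈ Xh := T.hat.sub (mem_image_of_mem _ (Or.inr hw))
    refine ratio_slit' ?_ ?_ ?_
    · rw [mem_sphere, dist_eq_norm] at haS
      rw [haS, ← dist_eq_norm]
      exact infDist_le_dist_of_mem hwX
    · intro h
      have := T.inj (Or.inl ha) (Or.inr hw) h
      subst this
      exact T.disj.le_bot ⟨ha, hw⟩
    · intro h; exact hz (h ▸ hwX)
  have h1 := hl.perturb T.symm.propA (z' := φ a) fun w hw => Or.inl (hpos w hw)
  rw [NLog.uniq T.ncB T.clB hf h1 b hb, Complex.add_im, add_sub_cancel_left, Complex.log_im]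
  exact Complex.abs_arg_lt_pi_div_two_iff.2 (Or.inl (hpos b hb))

lemma nonInterlaced (T : TimeT φ KA KB Xh)
    (hpi : ∀ a ∈ KA, ∀ b ∈ KB, ∃ f g : ℂ → ℂ, NLog (fun w => rho (φ w)) φ KB (φ a) f ∧
      NLog (fun w => rho (φ w)) φ KA (φ b) g ∧ f b = g a + Real.pi * Complex.I) :
    NonInterlaced (pieces φ KA Xh) (pieces φ KB Xh) := by
  intro z hz
  rw [← T.pieces_cover] at hz ⊢
  set r := infDist z Xh with hrdef
  have hsph : IsPreconnected (sphere z r) :=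
    isPreconnected_sphere (by rw [Complex.rank_real_complex]; norm_num) z r
  by_cases hA : (pieces φ KA Xh ∩ sphere z r).Nonempty
  swap
  · rw [not_nonempty_iff_eq_empty] at hA
    exact ⟨∅, sphere z r, empty_subset _, subset_rfl, isClosed_empty, isClosed_sphere,
      isPreconnected_empty, hsph, disjoint_bot_left, hA.subset, inter_subset_right⟩
  by_cases hB : (pieces φ KB Xh ∩ sphere z r).Nonempty
  swap
  · rw [not_nonempty_iff_eq_empty] at hB
    exact ⟨sphere z r, ∅, subset_rfl, empty_subset _, isClosed_sphere, isClosed_empty,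
      hsph, isPreconnected_empty, disjoint_bot_right, inter_subset_right, hB.subset⟩
  have hr0 : 0 ≤ r := infDist_nonneg
  obtain ⟨lA, hlA⟩ := T.out_good hz
  obtain ⟨lB, hlB⟩ := T.symm.out_good hz
  set SA := {w | w ∈ KA ∧ φ w ∈ sphere z r} with hSA
  set SB := {w | w ∈ KB ∧ φ w ∈ sphere z r} with hSB
  have hSAc : IsCompact SA := T.propA.compact_pre T.clA (isCompact_sphere z r)
  have hSBc : IsCompact SB := T.symm.propA.compact_pre T.clB (isCompact_sphere z r)
  have hSAn : SA.Nonempty := by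
    obtain ⟨p, hp, hpS⟩ := hA
    obtain ⟨a, ha, rfl⟩ := T.on_circle hz hp hpS
    exact ⟨a, ha, hpS⟩
  have hSBn : SB.Nonempty := by
    obtain ⟨p, hp, hpS⟩ := hB
    obtain ⟨a, ha, rfl⟩ := T.symm.on_circle hz hp hpS
    exact ⟨a, ha, hpS⟩
  have hkey : ∀ a ∈ SA, ∀ b ∈ SB, 0 < (lB b).im - (lA a).im ∧
      (lB b).im - (lA a).im < 2 * Real.pi := by
    rintro a ⟨ha, haS⟩ b ⟨hb, hbS⟩
    obtain ⟨f, g, hf, hg, hfg⟩ := hpi a ha b hb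
    have h1 := abs_lt.1 (T.circle_log hz hlB ha hb haS hf)
    have h2 := abs_lt.1 (T.symm.circle_log hz hlA hb ha hbS hg)
    have h3 := congrArg Complex.im hfg
    simp at h3
    constructor <;> linarith [h1.1, h1.2, h2.1, h2.2]
  have hcA : ContinuousOn (fun w => (lA w).im) SA :=
    Complex.continuous_im.comp_continuousOn (hlA.1.mono fun w hw => hw.1)
  have hcB : ContinuousOn (fun w => (lB w).im) SB :=
    Complex.continuous_im.comp_continuousOn (hlB.1.mono fun w hw => hw.1)
  obtain ⟨a0, ha0, hA0⟩ := hSAc.exists_isMinOn hSAn hcA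
  obtain ⟨a1, ha1, hA1⟩ := hSAc.exists_isMaxOn hSAn hcA
  obtain ⟨b0, hb0, hB0⟩ := hSBc.exists_isMinOn hSBn hcB
  obtain ⟨b1, hb1, hB1⟩ := hSBc.exists_isMaxOn hSBn hcB
  let c : ℝ → ℂ := fun θ => z - r * Complex.exp (θ * Complex.I)
  have hcc : Continuous c := by fun_prop
  have hcS : ∀ θ, c θ ∈ sphere z r := fun θ => by
    rw [mem_sphere, dist_eq_norm]
    simp only [c, sub_sub_cancel_left, norm_neg, norm_mul, Complex.norm_exp_ofReal_mul_I,
      Complex.norm_real, Real.norm_of_nonneg hr0, mul_one]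
  have hpar : ∀ (l : ℂ → ℂ) (w : ℂ), Complex.exp (l w) = z - φ w → φ w ∈ sphere z r →
      c (l w).im = φ w := by
    intro l w hl hw
    have h1 : ‖Complex.exp (l w)‖ = r := by
      rw [hl, ← dist_eq_norm, dist_comm]; exact hw
    have h2 : Complex.exp (l w) = r * Complex.exp ((l w).im * Complex.I) := by
      rw [← h1, Complex.norm_exp, Complex.ofReal_exp, ← Complex.exp_add, Complex.re_add_im]
    simp only [c]
    rw [← h2, hl]; ring
  have hr : 0 < r := by
    obtain ⟨p, hp, -⟩ := hA
    exact (T.hat.closed.notMem_iff_infDist_pos ⟨p, (T.pieces_sub hp).1⟩).1 hz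
  refine ⟨c '' Icc (lA a0).im (lA a1).im, c '' Icc (lB b0).im (lB b1).im, ?_, ?_,
    (isCompact_Icc.image hcc).isClosed, (isCompact_Icc.image hcc).isClosed,
    isPreconnected_Icc.image _ hcc.continuousOn, isPreconnected_Icc.image _ hcc.continuousOn,
    ?_, ?_, ?_⟩
  · rintro _ ⟨θ, -, rfl⟩; exact hcS θ
  · rintro _ ⟨θ, -, rfl⟩; exact hcS θ
  · rw [Set.disjoint_left]
    rintro _ ⟨x, hx, rfl⟩ ⟨y, hy, hxy⟩
    have h1 := (hkey a1 ha1 b0 hb0).1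
    have h2 := (hkey a0 ha0 b1 hb1).2
    have hlo : 0 < y - x := by linarith [hx.2, hy.1]
    have hhi : y - x < 2 * Real.pi := by linarith [hx.1, hy.2]
    simp only [c, sub_right_inj] at hxy
    have hrc : (r:ℂ) ≠ 0 := by exact_mod_cast hr.ne'
    have h3 := mul_left_cancel₀ hrc hxy
    rw [Complex.exp_eq_exp_iff_exists_int] at h3
    obtain ⟨n, hn⟩ := h3
    have h4 : y = x + n * (2 * Real.pi) := by
      have := congrArg Complex.im hn
      simpa using this
    have h5 : y - x = n * (2 * Real.pi) := by linarith
    rw [h5] at hlo hhi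
    have h6 : (0:ℝ) < n := by
      by_contra hcon
      push Not at hcon
      nlinarith [Real.pi_pos]
    have h7 : (n:ℝ) < 1 := by
      by_contra hcon
      push Not at hcon
      nlinarith [Real.pi_pos]
    have h8 : 0 < n := by exact_mod_cast h6
    have h9 : n < 1 := by exact_mod_cast h7
    omega
  · rintro p ⟨hp, hpS⟩
    obtain ⟨a, ha, rfl⟩ := T.on_circle hz hp hpS
    exact ⟨(lA a).im, ⟨hA0 (show a ∈ SA from ⟨ha, hpS⟩), hA1 (show a ∈ SA from ⟨ha, hpS⟩)⟩,
      hpar lA a (hlA.2.1 a ha) hpS⟩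
  · rintro p ⟨hp, hpS⟩
    obtain ⟨b, hb, rfl⟩ := T.symm.on_circle hz hp hpS
    exact ⟨(lB b).im, ⟨hB0 (show b ∈ SB from ⟨hb, hpS⟩), hB1 (show b ∈ SB from ⟨hb, hpS⟩)⟩,
      hpar lB b (hlB.2.1 b hb) hpS⟩

end TimeT


/-- if `X̂⁰ = A⁰ ∪ B⁰` with `A⁰, B⁰` disjoint closed and `A⁰` lying above
`B⁰`, then for each `t`, `X̂^t = A^t ∪ B^t` where `A^t, B^t` are the unions of the
corresponding components, and `A^t`, `B^t` are disjoint, closed and non-interlaced. -/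
theorem decomposition_preserved_nonInterlaced
    (X : Set ℂ) (hXne : X.Nonempty) (hXcpt : IsCompact X) (hXconn : IsConnected X)
    (hXns : IsConnected Xᶜ) (h0 : (0:ℂ) ∈ frontier X) (hXb : X ⊆ Metric.ball 0 1)
    (h : ℂ → ℝ → ℂ)
    (hcont : ContinuousOn (fun p : ℂ × ℝ => h p.1 p.2) (frontier X ×ˢ Set.Icc 0 1))
    (hinj : ∀ t ∈ Set.Icc (0:ℝ) 1, Set.InjOn (fun z => h z t) (frontier X))
    (hid : ∀ z ∈ frontier X, h z 0 = z)
    (hfix : ∀ t ∈ Set.Icc (0:ℝ) 1, h 0 t = 0)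
    (hXtb : ∀ t ∈ Set.Icc (0:ℝ) 1, XtSet h X t ⊆ Metric.ball 0 1)
    -- 𝐡 = H, the lift of h with 𝐡⁰ = id :
    (H : ℂ → ℝ → ℂ)
    (hHcont : ContinuousOn (fun p : ℂ × ℝ => H p.1 p.2) (bdLift X ×ˢ Set.Icc 0 1))
    (hHinj : ∀ t ∈ Set.Icc (0:ℝ) 1, Set.InjOn (fun z => H z t) (bdLift X))
    (hH0 : ∀ z ∈ bdLift X, H z 0 = z)
    (hHlift : ∀ z ∈ bdLift X, ∀ t ∈ Set.Icc (0:ℝ) 1,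
      Complex.exp (H z t) = h (Complex.exp z) t)
    (A0 B0 : Set ℂ) (hAB : hatSet X = A0 ∪ B0) (hABdisj : Disjoint A0 B0)
    (hAcl : IsClosed A0) (hBcl : IsClosed B0) (habove : LiesAboveSets A0 B0) :
    ∀ t ∈ Set.Icc (0:ℝ) 1, ∀ At Bt : Set ℂ,
      At = (⋃ C ∈ componentsOf A0, ⋃ x ∈ C ∩ bdLift X,
              connectedComponentIn (hatXt h X t) (H x t)) →
      Bt = (⋃ C ∈ componentsOf B0, ⋃ x ∈ C ∩ bdLift X,
              connectedComponentIn (hatXt h X t) (H x t)) →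
      (hatXt h X t = At ∪ Bt ∧ Disjoint At Bt ∧ IsClosed At ∧ IsClosed Bt ∧
        NonInterlaced At Bt) := by
  intro t ht At Bt hAt hBt
  have hXc : IsClosed X := hXcpt.isClosed
  have h0X : (0:ℂ) ∈ X := hXc.frontier_subset h0
  have ehat : hatSet X = Complex.exp ⁻¹' X := by
    ext z; simp [hatSet, Complex.exp_ne_zero]
  have hXr : ∀ w ∈ hatSet X, w.re < 0 := by
    intro w hw
    rw [ehat] at hw
    have := hXb hw
    rwa [mem_ball_zero_iff, Complex.norm_exp, Real.exp_lt_one_iff] at this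
  have hpc : IsPreconnected (A0 ∪ B0)ᶜ := by
    rw [← hAB, ehat, ← preimage_compl]
    refine exp_preimage_preconn hXc.isOpen_compl hXns.isPreconnected ?_ (fun h => h h0X)
    intro z hz hzX
    have := hXb hzX
    rw [mem_ball_zero_iff] at this; linarith
  have hAr : ∀ w ∈ A0, w.re < 0 := fun w hw => hXr w (hAB ▸ Or.inl hw)
  have hBr : ∀ w ∈ B0, w.re < 0 := fun w hw => hXr w (hAB ▸ Or.inr hw)
  have hNX : NC (hatSet X) := NC_lift hXconn.isPreconnected h0X
  have hNA : NC A0 := hNX.of_clopen hAB hABdisj hBcl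
  have hNB : NC B0 := hNX.of_clopen (hAB.trans (union_comm _ _)) hABdisj.symm hAcl
  have hbs : bdLift X ⊆ hatSet X := by
    rw [ehat, bdLift_eq]; exact preimage_mono hXc.frontier_subset
  set KA := A0 ∩ bdLift X with hKA
  set KB := B0 ∩ bdLift X with hKB
  have hKA' : KA ⊆ bdLift X := inter_subset_right
  have hKB' : KB ⊆ bdLift X := inter_subset_right
  have hK : bdLift X = KA ∪ KB := by
    rw [hKA, hKB, ← union_inter_distrib_right, ← hAB, inter_eq_right.2 hbs]
  have hclA : IsClosed KA := hAcl.inter (bdLift_closed X)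
  have hclB : IsClosed KB := hBcl.inter (bdLift_closed X)
  have hdK : Disjoint KA KB := hABdisj.mono inter_subset_left inter_subset_left
  have hNbd : NC (bdLift X) :=
    NC_lift (frontier_preconn hXc hXconn.isPreconnected hXns.isPreconnected) h0
  have hNKA : NC KA := hNbd.of_clopen hK hdK hclB
  have hNKB : NC KB := hNbd.of_clopen (hK.trans (union_comm _ _)) hdK.symm hclA
  have hup := H_uprop hXcpt hXb hcont hfix hHcont hH0 hHlift
  have hfacts : ∀ t ∈ Icc (0:ℝ) 1, HatFacts ((fun b => H b t) '' bdLift X) (hatXt h X t)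
      ((fun b => H b t) '' bdLift X) := by
    intro t ht
    have hcomp : IsCompact ((fun z => h z t) '' frontier X) := by
      refine (hXcpt.of_isClosed_subset isClosed_frontier hXc.frontier_subset).image_of_continuousOn ?_
      exact H_cont_b hcont ht
    have := hatFacts hcomp ⟨0, h0, hfix t ht⟩ (hXtb t ht)
    rw [H_image hHcont hH0 hHlift hfix ht] at this
    exact ⟨this.closed, this.closedK, this.sub, this.re_neg, this.preconn, this.absorb, this.bd⟩
  have hre : ∀ b ∈ bdLift X, ∀ t ∈ Icc (0:ℝ) 1, (H b t).re < 0 := fun b hb t ht =>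
    (hfacts t ht).re_neg _ ((hfacts t ht).sub (mem_image_of_mem _ hb))
  have hup' : ∀ K ⊆ bdLift X, UProp K H := fun K hK M => by
    obtain ⟨Q, hQ, h1⟩ := hup M
    exact ⟨Q, hQ, fun w hw => h1 w (hK hw)⟩
  have hne : ∀ a ∈ KA, ∀ b ∈ KB, ∀ t ∈ Icc (0:ℝ) 1, H a t ≠ H b t := by
    intro a ha b hb t ht hab
    have := hHinj t ht (hKA' ha) (hKB' hb) hab
    subst this
    exact hdK.le_bot ⟨ha, hb⟩
  have h01 : (0:ℝ) ∈ Icc (0:ℝ) 1 := by simp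
  have hpi : ∀ a ∈ KA, ∀ b ∈ KB, ∃ f g : ℂ → ℂ,
      NLog (fun w => rho (H w t)) (fun w => H w t) KB (H a t) f ∧
      NLog (fun w => rho (H w t)) (fun w => H w t) KA (H b t) g ∧
      f b = g a + Real.pi * Complex.I := by
    intro a ha b hb
    have hgA : b ∈ GoodSet rho id A0 :=
      comp_good hAcl hBcl hABdisj hAr hBr hpc hb.1 (mem_connectedComponentIn hb.1)
    have hgB : a ∈ GoodSet rho id B0 :=
      comp_good hBcl hAcl hABdisj.symm hBr hAr (union_comm A0 B0 ▸ hpc) ha.1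
        (mem_connectedComponentIn ha.1)
    have hstar := star hAcl hBcl hABdisj hAr hBr hpc hNA hNB habove ha.1 hb.1
    obtain ⟨L, hL0, hLc, hL⟩ := iso_log (K := KB) (H := H) (γ := fun t => H a t) (f0 := lam B0 a)
      (hHcont.mono (prod_mono hKB' subset_rfl)) (hup' _ hKB') (fun b hb => hre b (hKB' hb))
      (fun b hb => hH0 b (hKB' hb)) (H_cont_t hHcont (hKA' ha)) (fun b hb t ht => hne a ha b hb t ht)
      (by simp only [hH0 a (hKA' ha)]; exact (lam_spec hgB).mono inter_subset_left)
    obtain ⟨L', hL0', hLc', hL'⟩ := iso_log (K := KA) (H := H) (γ := fun t => H b t) (f0 := lam A0 b)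
      (hHcont.mono (prod_mono hKA' subset_rfl)) (hup' _ hKA') (fun b hb => hre b (hKA' hb))
      (fun b hb => hH0 b (hKA' hb)) (H_cont_t hHcont (hKB' hb))
      (fun a ha t ht => (hne a ha b hb t ht).symm)
      (by simp only [hH0 b (hKB' hb)]; exact (lam_spec hgA).mono inter_subset_left)
    refine ⟨_, _, hL t ht, hL' t ht, ?_⟩
    have := const_of_exp_one (S := Icc (0:ℝ) 1) isPreconnected_Icc
      (g := fun s => L b s - (L' a s + Real.pi * Complex.I))
      ((hLc b hb).sub ((hLc' a ha).add continuousOn_const))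
      (fun s hs => by
        have h1 := (hL s hs).2.1 b hb
        have h2 := (hL' s hs).2.1 a ha
        have h3 : H a s - H b s ≠ 0 := sub_ne_zero.2 (hne a ha b hb s hs)
        rw [Complex.exp_sub, Complex.exp_add, h1, h2, Complex.exp_pi_mul_I, mul_neg_one, neg_sub,
          div_self h3]) t ht 0 h01
    rw [hL0 b hb, hL0' a ha, hstar, sub_self] at this
    exact sub_eq_zero.1 this
  have T : TimeT (fun b => H b t) KA KB (hatXt h X t) := by
    refine ⟨hclA, hclB, hdK, hNKA, hNKB, hK ▸ hup.propOn hHcont ht, hK ▸ hHinj t ht,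
      hK ▸ hfacts t ht, fun a ha => ?_, fun b hb => ?_⟩
    · have hgB : a ∈ GoodSet rho id B0 :=
        comp_good hBcl hAcl hABdisj.symm hBr hAr (union_comm A0 B0 ▸ hpc) ha.1
          (mem_connectedComponentIn ha.1)
      obtain ⟨L, -, -, hL⟩ := iso_log (K := KB) (H := H) (γ := fun t => H a t) (f0 := lam B0 a)
        (hHcont.mono (prod_mono hKB' subset_rfl)) (hup' _ hKB') (fun b hb => hre b (hKB' hb))
        (fun b hb => hH0 b (hKB' hb)) (H_cont_t hHcont (hKA' ha))
        (fun b hb t ht => hne a ha b hb t ht)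
        (by simp only [hH0 a (hKA' ha)]; exact (lam_spec hgB).mono inter_subset_left)
      exact ⟨_, hL t ht⟩
    · have hgA : b ∈ GoodSet rho id A0 :=
        comp_good hAcl hBcl hABdisj hAr hBr hpc hb.1 (mem_connectedComponentIn hb.1)
      obtain ⟨L, -, -, hL⟩ := iso_log (K := KA) (H := H) (γ := fun t => H b t) (f0 := lam A0 b)
        (hHcont.mono (prod_mono hKA' subset_rfl)) (hup' _ hKA') (fun b hb => hre b (hKA' hb))
        (fun b hb => hH0 b (hKA' hb)) (H_cont_t hHcont (hKB' hb))
        (fun a ha t ht => (hne a ha b hb t ht).symm)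
        (by simp only [hH0 b (hKB' hb)]; exact (lam_spec hgA).mono inter_subset_left)
      exact ⟨_, hL t ht⟩
  have hpieces : ∀ A : Set ℂ, (⋃ C ∈ componentsOf A, ⋃ x ∈ C ∩ bdLift X,
      connectedComponentIn (hatXt h X t) (H x t)) =
      TimeT.pieces (fun b => H b t) (A ∩ bdLift X) (hatXt h X t) := by
    intro A
    ext z
    simp only [TimeT.pieces, mem_iUnion]
    constructor
    · rintro ⟨C, ⟨y, hy, rfl⟩, x, hx, hz⟩
      exact ⟨x, ⟨connectedComponentIn_subset _ _ hx.1, hx.2⟩, hz⟩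
    · rintro ⟨x, hx, hz⟩
      exact ⟨_, ⟨x, hx.1, rfl⟩, x, ⟨mem_connectedComponentIn hx.1, hx.2⟩, hz⟩
  rw [hpieces] at hAt hBt
  subst hAt hBt
  exact ⟨T.pieces_cover, T.pieces_disj, T.pieces_closed, T.symm.pieces_closed, T.nonInterlaced hpi⟩
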